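/- arXiv:1706.03240 — 2 statements merged into one kernel-verified Lean document; each statement's English description precedes it below -/
import Mathlib

section
/- There is no Z/2-algebra isomorphism between R_A = (Z/2)[x,y,z]/(x^3*y + y*z^3, y^3 + y*z^2, y^2*z + z^3, x*z, x^4) and R_B = (Z/2)[x,y,z]/(x^2*y^2 + y^2*z^2, y^4 + y^2*z^2, y^2*z + z^3, x*z, x^3) that is induced by a linear bijection of the degree-2 part; in particular, no invertible linear substitution of variables over Z/2 carries the first ideal into the second. -/
open MvPolynomial

/-- The monomial `x^a y^b z^c` as an exponent vector. -/
noncomputable def expo (a b c : ℕ) : Fin 3 →₀ ℕ :=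
  Finsupp.single 0 a + Finsupp.single 1 b + Finsupp.single 2 c

lemma expo_le (a b c a' b' c' : ℕ) :
    expo a b c ≤ expo a' b' c' ↔ a ≤ a' ∧ b ≤ b' ∧ c ≤ c' := by
  simp [expo, Finsupp.le_def, Fin.forall_fin_succ, Finsupp.single_apply]

lemma expo_inj (a b c a' b' c' : ℕ) :
    expo a b c = expo a' b' c' ↔ a = a' ∧ b = b' ∧ c = c' := by
  simp [expo, Finsupp.ext_iff, Fin.forall_fin_succ, Finsupp.single_apply]

lemma monomial_expo (a b c : ℕ) (r : ZMod 2) :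
    (monomial (expo a b c) r : MvPolynomial (Fin 3) (ZMod 2)) =
      C r * (X 0 ^ a * X 1 ^ b * X 2 ^ c) := by
  simp [expo, X_pow_eq_monomial, monomial_mul, C_mul_monomial]

/-- Exponents of a monomial ideal containing the ideal `I_B`. -/
def expoSet : Set (Fin 3 →₀ ℕ) :=
  {expo 1 0 1, expo 3 0 0, expo 0 0 3, expo 0 2 1, expo 0 4 0, expo 2 2 0}

lemma coeff_zero_of_mem {p : MvPolynomial (Fin 3) (ZMod 2)}
    (hp : p ∈ Ideal.span ({X 0 ^ 2 * X 1 ^ 2 + X 1 ^ 2 * X 2 ^ 2,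
      X 1 ^ 4 + X 1 ^ 2 * X 2 ^ 2, X 1 ^ 2 * X 2 + X 2 ^ 3, X 0 * X 2, X 0 ^ 3} :
      Set (MvPolynomial (Fin 3) (ZMod 2))))
    (m : Fin 3 →₀ ℕ) (hm : ∀ s ∈ expoSet, ¬ s ≤ m) : coeff m p = 0 := by
  have hJ : p ∈ Ideal.span ((fun s => monomial s (1 : ZMod 2)) '' expoSet) := by
    have key : ∀ a b c, expo a b c ∈ expoSet →
        (X 0 ^ a * X 1 ^ b * X 2 ^ c : MvPolynomial (Fin 3) (ZMod 2)) ∈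
        Ideal.span ((fun s => monomial s (1 : ZMod 2)) '' expoSet) := by
      intro a b c h
      refine Ideal.subset_span ⟨_, h, ?_⟩
      simp [monomial_expo]
    have k1 := key 1 0 1 (by simp [expoSet])
    have k2 := key 3 0 0 (by simp [expoSet])
    have k3 := key 0 0 3 (by simp [expoSet])
    have k4 := key 0 2 1 (by simp [expoSet])
    have k5 := key 0 4 0 (by simp [expoSet])
    have k6 := key 2 2 0 (by simp [expoSet])
    simp only [pow_zero, pow_one, one_mul, mul_one] at k1 k2 k3 k4 k5 k6
    have k7 := Ideal.mul_mem_right (X 2) _ k4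
    rw [mul_assoc, ← pow_two] at k7
    refine Ideal.span_le.2 ?_ hp
    rintro q (rfl | rfl | rfl | rfl | rfl)
    · exact Ideal.add_mem _ k6 k7
    · exact Ideal.add_mem _ k5 k7
    · exact Ideal.add_mem _ k4 k3
    · exact k1
    · exact k2
  by_contra hne
  obtain ⟨s, hs, hsm⟩ := mem_ideal_span_monomial_image.1 hJ m (mem_support_iff.2 hne)
  exact hm s hs hsm

/-- No invertible linear substitution of the variables of `(Z/2)[x,y,z]` carries
the ideal `I_A = (x³y+yz³, y³+yz², y²z+z³, xz, x⁴)` (case A₁) into the ideal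
`I_B = (x²y²+y²z², y⁴+y²z², y²z+z³, xz, x³)` (case B₁); hence no isomorphism of
the quotient rings is induced by a linear bijection. Here `x = X 0`, `y = X 1`,
`z = X 2`, and a linear substitution is given by an invertible matrix `M` over
`Z/2`, sending `X i` to `∑ j, M i j • X j`. -/
theorem stmt_9 (IA IB : Ideal (MvPolynomial (Fin 3) (ZMod 2)))
    (hA : IA = Ideal.span {X 0 ^ 3 * X 1 + X 1 * X 2 ^ 3, X 1 ^ 3 + X 1 * X 2 ^ 2,
      X 1 ^ 2 * X 2 + X 2 ^ 3, X 0 * X 2, X 0 ^ 4})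
    (hB : IB = Ideal.span {X 0 ^ 2 * X 1 ^ 2 + X 1 ^ 2 * X 2 ^ 2,
      X 1 ^ 4 + X 1 ^ 2 * X 2 ^ 2, X 1 ^ 2 * X 2 + X 2 ^ 3, X 0 * X 2, X 0 ^ 3}) :
    ¬ ∃ M : Matrix (Fin 3) (Fin 3) (ZMod 2), IsUnit M.det ∧
      ∀ p ∈ IA, (aeval (fun i => ∑ j, C (M i j) * X j) p : MvPolynomial (Fin 3) (ZMod 2)) ∈ IB := by
  subst hA hB
  rintro ⟨M, hdet, h⟩
  have h1 := h (X 0 * X 2) (Ideal.subset_span (by simp))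
  have h2 := h (X 1 ^ 3 + X 1 * X 2 ^ 2) (Ideal.subset_span (by simp))
  simp only [map_mul, map_add, map_pow, aeval_X, Fin.sum_univ_three] at h1 h2
  clear h
  rw [Matrix.det_fin_three] at hdet
  generalize M 0 0 = a at *
  generalize M 0 1 = b at *
  generalize M 0 2 = c at *
  generalize M 1 0 = d at *
  generalize M 1 1 = e at *
  generalize M 1 2 = f at *
  generalize M 2 0 = u at *
  generalize M 2 1 = v at *
  generalize M 2 2 = w at *
  have e1 : (C a * X 0 + C b * X 1 + C c * X 2) * (C u * X 0 + C v * X 1 + C w * X 2) =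
      monomial (expo 2 0 0) (a * u) + monomial (expo 0 2 0) (b * v) +
      monomial (expo 0 0 2) (c * w) + monomial (expo 1 1 0) (a * v + b * u) +
      monomial (expo 0 1 1) (b * w + c * v) +
      (monomial (expo 1 0 1) (a * w + c * u) : MvPolynomial (Fin 3) (ZMod 2)) := by
    simp only [monomial_expo, map_add, map_mul]
    ring
  have e2 : (C d * X 0 + C e * X 1 + C f * X 2) ^ 3 +
      (C d * X 0 + C e * X 1 + C f * X 2) * (C u * X 0 + C v * X 1 + C w * X 2) ^ 2 =
      monomial (expo 0 3 0) (e ^ 3 + e * v ^ 2) + monomial (expo 3 0 0) (d ^ 3 + d * u ^ 2) +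
      monomial (expo 0 0 3) (f ^ 3 + f * w ^ 2) +
      monomial (expo 2 1 0) (3 * d ^ 2 * e + e * u ^ 2 + 2 * d * u * v) +
      monomial (expo 2 0 1) (3 * d ^ 2 * f + f * u ^ 2 + 2 * d * u * w) +
      monomial (expo 1 2 0) (3 * d * e ^ 2 + d * v ^ 2 + 2 * e * u * v) +
      monomial (expo 0 2 1) (3 * e ^ 2 * f + f * v ^ 2 + 2 * e * v * w) +
      monomial (expo 1 0 2) (3 * d * f ^ 2 + d * w ^ 2 + 2 * f * u * w) +
      monomial (expo 0 1 2) (3 * e * f ^ 2 + e * w ^ 2 + 2 * f * v * w) +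
      (monomial (expo 1 1 1) (6 * d * e * f + 2 * d * v * w + 2 * e * u * w + 2 * f * u * v) :
        MvPolynomial (Fin 3) (ZMod 2)) := by
    simp only [monomial_expo, map_add, map_mul, map_pow, map_ofNat]
    ring
  rw [e1] at h1
  rw [e2] at h2
  have c1 := coeff_zero_of_mem h1 (expo 0 2 0) (by simp [expoSet, expo_le])
  have c2 := coeff_zero_of_mem h1 (expo 1 1 0) (by simp [expoSet, expo_le])
  have c3 := coeff_zero_of_mem h1 (expo 0 1 1) (by simp [expoSet, expo_le])
  have c4 := coeff_zero_of_mem h2 (expo 0 3 0) (by simp [expoSet, expo_le])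
  simp only [coeff_add, coeff_monomial, expo_inj] at c1 c2 c3 c4
  norm_num at c1 c2 c3 c4
  clear h1 h2 e1 e2
  have hd := hdet.ne_zero
  clear hdet
  have z : ∀ t : ZMod 2, t = 0 ∨ t = 1 := by decide
  rcases z b with rfl | rfl <;> rcases z v with rfl | rfl <;> rcases z e with rfl | rfl <;>
    simp_all
end

section
/- Let P be an n-dimensional simple polytope with m facets. Then the bigraded Betti numbers of its Tor-algebra satisfy the duality β^{-i,2j}(P) = β^{-(m-n)+i, 2(m-j)}(P) for all i,j, together with β^{0,0}(P) = β^{-(m-n),2m}(P) = 1, and β^{-i,2j}(P) = 0 whenever i < 0 or i > m-n. -/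
noncomputable section

open scoped Classical

/-- An `n`-dimensional simple polytope in `ℝⁿ` together with an indexing of its
`m` facets. Facets are the nonempty exposed faces whose affine hull has
dimension `n-1`; simplicity says every vertex lies on exactly `n` facets. -/
structure SimplePolytope (n m : ℕ) where
  carrier : Set (EuclideanSpace ℝ (Fin n))
  isPolytope : ∃ V : Finset (EuclideanSpace ℝ (Fin n)),
    carrier = convexHull ℝ (V : Set (EuclideanSpace ℝ (Fin n)))
  fullDim : affineSpan ℝ carrier = ⊤
  facet : Fin m → Set (EuclideanSpace ℝ (Fin n))
  facet_inj : Function.Injective facet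
  facet_isFacet : ∀ i, IsExposed ℝ carrier (facet i) ∧ (facet i).Nonempty ∧
    Module.finrank ℝ (vectorSpan ℝ (facet i)) = n - 1
  facet_complete : ∀ F : Set (EuclideanSpace ℝ (Fin n)),
    IsExposed ℝ carrier F → F.Nonempty →
      Module.finrank ℝ (vectorSpan ℝ F) = n - 1 → ∃ i, F = facet i
  simple : ∀ v ∈ Set.extremePoints ℝ carrier, {i : Fin m | v ∈ facet i}.ncard = n

namespace SimplePolytope

variable {n m : ℕ} (P : SimplePolytope n m)

/-- `S` is a face of the Stanley–Reisner (boundary) complex of `P` iff the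
facets indexed by `S` have a common point. -/
def IsFace (S : Finset (Fin m)) : Prop :=
  (P.carrier ∩ ⋂ i ∈ S, P.facet i).Nonempty

/-- The total degree of a monomial exponent vector. -/
def mdeg (f : Fin m →₀ ℕ) : ℕ := f.sum fun _ e => e

/-- The Koszul differential on `Λ[u_1,…,u_m] ⊗ ℚ(P)`: a basis element is a pair
`(S, f)` of an exterior monomial `u_S` and a monomial `v^f` of the
Stanley–Reisner ring `ℚ(P)` (monomials with non-face support being zero), and
`d(u_S ⊗ v^f) = ∑_{s ∈ S} ± u_{S∖s} ⊗ v_s v^f`. -/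
def koszulD : ((Finset (Fin m) × (Fin m →₀ ℕ)) →₀ ℚ) →ₗ[ℚ]
    ((Finset (Fin m) × (Fin m →₀ ℕ)) →₀ ℚ) :=
  Finsupp.lsum ℚ fun b =>
    (LinearMap.id : ℚ →ₗ[ℚ] ℚ).smulRight
      (∑ s ∈ b.1,
        if P.IsFace (b.2 + Finsupp.single s 1).support then
          ((-1 : ℚ) ^ (b.1.filter (· < s)).card) •
            Finsupp.single (b.1.erase s, b.2 + Finsupp.single s 1) (1 : ℚ)
        else 0)

/-- The bigraded piece of `Λ[u_1,…,u_m] ⊗ ℚ(P)` of bidegree `(-i, 2j)`: the span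
of the basis elements `u_S ⊗ v^f` with `v^f` supported on a face, `|S| = i` and
`|S| + deg f = j`. -/
def piece (i j : ℤ) : Submodule ℚ ((Finset (Fin m) × (Fin m →₀ ℕ)) →₀ ℚ) :=
  Submodule.span ℚ {g | ∃ b : Finset (Fin m) × (Fin m →₀ ℕ),
    (b.1.card : ℤ) = i ∧ (b.1.card : ℤ) + mdeg b.2 = j ∧
    P.IsFace b.2.support ∧ g = Finsupp.single b 1}

/-- The bigraded Betti number `β^{-i,2j}(P)`: the dimension over `ℚ` of the
bidegree `(-i,2j)` part of the Koszul homology `Tor(P)` of the Stanley–Reisner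
ring of `P`. -/
def betti (i j : ℤ) : ℕ :=
  Module.finrank ℚ
    (↥(LinearMap.ker P.koszulD ⊓ P.piece i j) ⧸
      Submodule.comap (LinearMap.ker P.koszulD ⊓ P.piece i j).subtype
        (Submodule.map P.koszulD (P.piece (i + 1) j)))

end SimplePolytope


namespace TorDual

variable {m : ℕ}

/-- Indices of the basis elements `u_S ⊗ v^f`. -/
abbrev Bs (m : ℕ) := Finset (Fin m) × (Fin m →₀ ℕ)

/-- The free module on the basis elements. -/
abbrev Ch (m : ℕ) := Bs m →₀ ℚ

/-- basis vector -/
abbrev ee (b : Bs m) : Ch m := Finsupp.single b 1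

/-- elementary transposition sign -/
def sg (s t : Fin m) : ℚ := if t < s then -1 else 1

/-- sign of a letter against a set -/
def sgS (s : Fin m) (T : Finset (Fin m)) : ℚ := ∏ t ∈ T, sg s t

lemma sg_self (s : Fin m) : sg s s = 1 := by simp [sg]

lemma sg_mul_self (s t : Fin m) : sg s t * sg s t = 1 := by
  unfold sg; split_ifs <;> norm_num

lemma sg_swap {s t : Fin m} (h : s ≠ t) : sg s t * sg t s = -1 := by
  unfold sg
  rcases lt_or_gt_of_ne h with h | h
  · simp [h, h.not_gt]
  · simp [h, h.not_gt]

lemma sgS_mul_self (s : Fin m) (T : Finset (Fin m)) : sgS s T * sgS s T = 1 := by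
  unfold sgS
  rw [← Finset.prod_mul_distrib]
  simp [sg_mul_self]

lemma sgS_ne (s : Fin m) (T : Finset (Fin m)) : sgS s T ≠ 0 := by
  intro h
  have := sgS_mul_self s T
  rw [h] at this
  norm_num at this

lemma sgS_insert (s t : Fin m) (T : Finset (Fin m)) (h : t ∉ T) :
    sgS s (insert t T) = sg s t * sgS s T := by
  unfold sgS; rw [Finset.prod_insert h]

lemma sgS_erase (s t : Fin m) (T : Finset (Fin m)) (h : t ∈ T) :
    sgS s T = sg s t * sgS s (T.erase t) := by
  unfold sgS; rw [Finset.mul_prod_erase _ _ h]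

lemma sgS_erase_self (s : Fin m) (T : Finset (Fin m)) (h : s ∈ T) :
    sgS s (T.erase s) = sgS s T := by
  rw [sgS_erase s s T h, sg_self, one_mul]

lemma pow_eq_sgS (s : Fin m) (T : Finset (Fin m)) :
    (-1 : ℚ) ^ (T.filter (· < s)).card = sgS s T := by
  unfold sgS sg
  rw [Finset.prod_ite]
  simp

/-- Koszul differential for a general complex -/
def kd (K : Finset (Fin m) → Prop) : Ch m →ₗ[ℚ] Ch m :=
  Finsupp.lsum ℚ fun b =>
    (LinearMap.id : ℚ →ₗ[ℚ] ℚ).smulRight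
      (∑ s ∈ b.1,
        if K (b.2 + Finsupp.single s 1).support then
          ((-1 : ℚ) ^ (b.1.filter (· < s)).card) •
            Finsupp.single (b.1.erase s, b.2 + Finsupp.single s 1) (1 : ℚ)
        else 0)

lemma supp_add (f : Fin m →₀ ℕ) (s : Fin m) :
    (f + Finsupp.single s 1).support = insert s f.support := by
  ext i
  simp only [Finsupp.mem_support_iff, Finsupp.add_apply, Finset.mem_insert, Finsupp.single_apply]
  by_cases h : s = i
  · simp [h]
  · simp [h, Ne.symm h]

lemma kd_ee (K : Finset (Fin m) → Prop) (b : Bs m) :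
    kd K (ee b) = ∑ s ∈ b.1, if K (insert s b.2.support) then
      sgS s b.1 • ee (b.1.erase s, b.2 + Finsupp.single s 1) else 0 := by
  unfold kd
  simp only [Finsupp.lsum_single, LinearMap.smulRight_apply, LinearMap.id_apply, one_smul,
    supp_add, pow_eq_sgS]

/-- faces of the complex with the given facets -/
def FK {V : Type} (σ : V → Finset (Fin m)) (τ : Finset (Fin m)) : Prop := ∃ v, τ ⊆ σ v

/-- Shelling-type data. -/
structure Shell {V : Type} (σ D : V → Finset (Fin m)) (lv : V → ℤ) : Prop where
  sub : ∀ v, D v ⊆ σ v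
  a1 : ∀ v w τ, D v ⊆ τ → τ ⊆ σ v → τ ⊆ σ w → w ≠ v → lv v < lv w
  a2 : ∀ v τ, τ ⊆ σ v → ¬ D v ⊆ τ → ∃ w, τ ⊆ σ w ∧ lv w < lv v

/-- filtration by levels -/
def Fil {V : Type} (σ : V → Finset (Fin m)) (lv : V → ℤ) (k : ℤ) : Submodule ℚ (Ch m) :=
  Submodule.span ℚ {g | ∃ c : Bs m, FK σ c.2.support ∧
    (∀ w, c.2.support ⊆ σ w → k ≤ lv w) ∧ g = ee c}

section
variable {V : Type} {σ D : V → Finset (Fin m)} {lv : V → ℤ}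

lemma ee_mem_Fil {k : ℤ} {c : Bs m} (h : FK σ c.2.support)
    (h' : ∀ w, c.2.support ⊆ σ w → k ≤ lv w) : ee c ∈ Fil σ lv k :=
  Submodule.subset_span ⟨c, h, h', rfl⟩

lemma Fil_mono {k l : ℤ} (h : k ≤ l) : Fil σ lv l ≤ Fil σ lv k := by
  apply Submodule.span_mono
  rintro g ⟨c, h1, h2, rfl⟩
  exact ⟨c, h1, fun w hw => h.trans (h2 w hw), rfl⟩

/-- `v` is the lowest vertex of the face carrying `b` -/
def Rel (σ D : V → Finset (Fin m)) (v : V) (b : Bs m) : Prop :=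
  D v ⊆ b.2.support ∧ b.2.support ⊆ σ v

/-- multidegree -/
def md (b : Bs m) (i : Fin m) : ℕ := b.2 i + if i ∈ b.1 then 1 else 0

/-- toggle set -/
def tog (σ D : V → Finset (Fin m)) (v : V) (b : Bs m) : Finset (Fin m) :=
  (σ v).filter fun i => 2 ≤ md b i ∨ (i ∉ D v ∧ 1 ≤ md b i)

/-- basis value of the contraction -/
def hb (σ D : V → Finset (Fin m)) (b : Bs m) : Ch m :=
  if h : ∃ v, Rel σ D v b ∧ (tog σ D v b).Nonempty then
    if (tog σ D h.choose b).min' h.choose_spec.2 ∈ b.1 then 0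
    else sgS ((tog σ D h.choose b).min' h.choose_spec.2) b.1 •
      ee (insert ((tog σ D h.choose b).min' h.choose_spec.2) b.1,
        b.2 - Finsupp.single ((tog σ D h.choose b).min' h.choose_spec.2) 1)
  else 0

/-- the contraction -/
def hop (σ D : V → Finset (Fin m)) : Ch m →ₗ[ℚ] Ch m :=
  Finsupp.lsum ℚ fun b => (LinearMap.id : ℚ →ₗ[ℚ] ℚ).smulRight (hb σ D b)

lemma hop_ee (b : Bs m) : hop σ D (ee b) = hb σ D b := by
  simp [hop, ee]

lemma Shell.exists_rel (sh : Shell σ D lv) [Finite V] {b : Bs m} (hb : FK σ b.2.support) :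
    ∃ v, Rel σ D v b := by
  obtain ⟨v0, hv0⟩ := hb
  obtain ⟨v, hv, hmin⟩ := Set.exists_min_image {v | b.2.support ⊆ σ v} lv (Set.toFinite _) ⟨v0, hv0⟩
  refine ⟨v, ?_, hv⟩
  by_contra hD
  obtain ⟨w, hw, hlt⟩ := sh.a2 v _ hv hD
  exact absurd (hmin w hw) (not_le.2 hlt)

lemma Shell.rel_unique (sh : Shell σ D lv) {b : Bs m} {v w : V} (hv : Rel σ D v b)
    (hw : Rel σ D w b) : v = w := by
  by_contra hne
  have h1 := sh.a1 v w _ hv.1 hv.2 hw.2 (Ne.symm hne)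
  have h2 := sh.a1 w v _ hw.1 hw.2 hv.2 hne
  exact lt_asymm h1 h2

lemma Shell.rel_le (sh : Shell σ D lv) {b : Bs m} {v w : V} (hv : Rel σ D v b)
    (hw : b.2.support ⊆ σ w) : lv v ≤ lv w := by
  by_cases h : w = v
  · rw [h]
  · exact (sh.a1 v w _ hv.1 hv.2 hw h).le

lemma Shell.ee_mem_of_rel (sh : Shell σ D lv) {b : Bs m} {v : V} (hv : Rel σ D v b) :
    ee b ∈ Fil σ lv (lv v) :=
  ee_mem_Fil ⟨v, hv.2⟩ fun _ hw => sh.rel_le hv hw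

lemma Shell.hb_of_empty (sh : Shell σ D lv) {b : Bs m} {v : V} (hv : Rel σ D v b)
    (h : ¬ (tog σ D v b).Nonempty) : hb σ D b = 0 := by
  unfold hb
  rw [dif_neg]
  rintro ⟨w, hw, hn⟩
  rw [sh.rel_unique hw hv] at hn
  exact h hn

lemma Shell.hb_eq (sh : Shell σ D lv) {b : Bs m} {v : V} (hv : Rel σ D v b)
    (h : (tog σ D v b).Nonempty) : hb σ D b =
      if (tog σ D v b).min' h ∈ b.1 then 0
      else sgS ((tog σ D v b).min' h) b.1 •
      ee (insert ((tog σ D v b).min' h) b.1,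
        b.2 - Finsupp.single ((tog σ D v b).min' h) 1) := by
  have hex : ∃ v, Rel σ D v b ∧ (tog σ D v b).Nonempty := ⟨v, hv, h⟩
  unfold hb
  rw [dif_pos hex]
  have : hex.choose = v := sh.rel_unique hex.choose_spec.1 hv
  have h2 : (tog σ D hex.choose b).min' hex.choose_spec.2 = (tog σ D v b).min' h := by
    congr 1; rw [this]
  rw [h2]

lemma md_erase {b : Bs m} {s : Fin m} (hs : s ∈ b.1) :
    md (b.1.erase s, b.2 + Finsupp.single s 1) = md b := by
  funext i
  by_cases h : s = i
  · subst h; simp [md, hs]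
  · simp [md, Ne.symm h]

lemma md_insert {b : Bs m} {s : Fin m} (hs : s ∉ b.1) (hf : 1 ≤ b.2 s) :
    md (insert s b.1, b.2 - Finsupp.single s 1) = md b := by
  funext i
  by_cases h : s = i
  · subst h; simp [md, hs]; omega
  · simp [md, Ne.symm h]

lemma tog_congr {b c : Bs m} (h : md c = md b) (v : V) : tog σ D v c = tog σ D v b := by
  unfold tog; rw [h]

lemma supp_sub_subset (f : Fin m →₀ ℕ) (s : Fin m) :
    (f - Finsupp.single s 1).support ⊆ f.support := by
  intro i hi
  simp only [Finsupp.mem_support_iff, Finsupp.tsub_apply] at hi ⊢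
  omega

lemma supp_sub_of_ne {f : Fin m →₀ ℕ} {s i : Fin m} (h : i ≠ s) (hi : i ∈ f.support) :
    i ∈ (f - Finsupp.single s 1).support := by
  simp only [Finsupp.mem_support_iff, Finsupp.tsub_apply, Finsupp.single_apply] at hi ⊢
  simp [Ne.symm h, hi]

lemma tog_toggle {b : Bs m} {v : V} {i : Fin m} (hv : Rel σ D v b)
    (hi : i ∈ tog σ D v b) (hib : i ∉ b.1) :
    1 ≤ b.2 i ∧ Rel σ D v (insert i b.1, b.2 - Finsupp.single i 1) := by
  replace hi := Finset.mem_filter.1 hi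
  simp only [md, hib, if_false, add_zero] at hi
  refine ⟨by omega, ?_, (supp_sub_subset _ _).trans hv.2⟩
  intro j hj
  by_cases hji : j = i
  · subst hji
    rcases hi.2 with h | h
    · simp only [Finsupp.mem_support_iff, Finsupp.tsub_apply, Finsupp.single_eq_same]
      omega
    · exact absurd hj h.1
  · exact supp_sub_of_ne hji (hv.1 hj)

/-- `h` maps a basis element to a multiple of a noncritical element of the same level. -/
lemma Shell.hb_cases (sh : Shell σ D lv) {b : Bs m} {v : V} (hv : Rel σ D v b) :
    hb σ D b = 0 ∨ ∃ (q : ℚ) (c : Bs m), hb σ D b = q • ee c ∧ Rel σ D v c ∧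
      (tog σ D v c).Nonempty ∧ md c = md b := by
  by_cases h : (tog σ D v b).Nonempty
  · rw [sh.hb_eq hv h]
    split_ifs with hi
    · left; rfl
    · right
      have hm := Finset.min'_mem _ h
      have := tog_toggle hv hm hi
      have hmd := md_insert hi this.1
      refine ⟨_, _, rfl, this.2, ?_, hmd⟩
      rw [tog_congr hmd]; exact h
  · left; exact sh.hb_of_empty hv h

lemma Shell.hb_mem (sh : Shell σ D lv) {b : Bs m} {v : V} (hv : Rel σ D v b) :
    hb σ D b ∈ Fil σ lv (lv v) := by
  rcases sh.hb_cases hv with h | ⟨q, c, h, h1, -⟩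
  · rw [h]; exact Submodule.zero_mem _
  · rw [h]; exact Submodule.smul_mem _ _ (sh.ee_mem_of_rel h1)

lemma Shell.hop_Fil (sh : Shell σ D lv) [Finite V] {k : ℤ} {x : Ch m} (hx : x ∈ Fil σ lv k) :
    hop σ D x ∈ Fil σ lv k := by
  refine Submodule.span_induction ?_ ?_ ?_ ?_ hx
  · rintro g ⟨c, h1, h2, rfl⟩
    obtain ⟨v, hv⟩ := sh.exists_rel h1
    rw [hop_ee]
    exact Fil_mono (h2 v hv.2) (sh.hb_mem hv)
  · simp
  · intro x y _ _ hx hy; rw [map_add]; exact Submodule.add_mem _ hx hy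
  · intro a x _ hx; rw [map_smul]; exact Submodule.smul_mem _ _ hx

/-- adding a letter outside `σ v` raises the level. -/
lemma Shell.mem_up (sh : Shell σ D lv) {f : Fin m →₀ ℕ} {v : V} (S : Finset (Fin m))
    (h1 : D v ⊆ f.support) (h2 : f.support ⊆ σ v) {s : Fin m} (hs : s ∉ σ v)
    (hK : FK σ (insert s f.support)) :
    ee (S, f + Finsupp.single s 1) ∈ Fil σ lv (lv v + 1) := by
  apply ee_mem_Fil
  · rw [supp_add]; exact hK
  · intro w hw
    rw [supp_add] at hw
    have := sh.a1 v w f.support h1 h2 ((Finset.subset_insert _ _).trans hw) (by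
      rintro rfl; exact hs (hw (Finset.mem_insert_self _ _)))
    exact this

/-- part of the differential that stays at the level of `v`. -/
lemma Shell.kd_mod (sh : Shell σ D lv) {b : Bs m} {v : V} (hv : Rel σ D v b) :
    kd (FK σ) (ee b) - ∑ s ∈ b.1.filter (· ∈ σ v),
      sgS s b.1 • ee (b.1.erase s, b.2 + Finsupp.single s 1) ∈ Fil σ lv (lv v + 1) := by
  rw [kd_ee, Finset.sum_filter, ← Finset.sum_sub_distrib]
  apply Submodule.sum_mem
  intro s hs
  by_cases h : s ∈ σ v
  · have : FK σ (insert s b.2.support) := ⟨v, Finset.insert_subset h hv.2⟩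
    simp [h, this]
  · simp only [h, if_false, sub_zero]
    split_ifs with hK
    · exact Submodule.smul_mem _ _ (sh.mem_up _ hv.1 hv.2 h hK)
    · exact Submodule.zero_mem _

lemma rel_add {b : Bs m} {v : V} (hv : Rel σ D v b) {s : Fin m} (hs : s ∈ σ v)
    (S : Finset (Fin m)) : Rel σ D v (S, b.2 + Finsupp.single s 1) := by
  unfold Rel
  rw [supp_add]
  exact ⟨hv.1.trans (Finset.subset_insert _ _), Finset.insert_subset hs hv.2⟩

lemma add_sub_single_comm {f : Fin m →₀ ℕ} {s i : Fin m} (h : 1 ≤ f i) :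
    f + Finsupp.single s 1 - Finsupp.single i 1 = f - Finsupp.single i 1 + Finsupp.single s 1 := by
  ext j
  simp only [Finsupp.tsub_apply, Finsupp.add_apply, Finsupp.single_apply]
  by_cases hi : i = j
  · subst hi; split_ifs <;> omega
  · simp [hi]

lemma sub_add_single {f : Fin m →₀ ℕ} {i : Fin m} (h : 1 ≤ f i) :
    f - Finsupp.single i 1 + Finsupp.single i 1 = f := by
  ext j
  simp only [Finsupp.tsub_apply, Finsupp.add_apply, Finsupp.single_apply]
  by_cases hi : i = j
  · subst hi; simp; omega
  · simp [hi]

lemma Shell.homotopy (sh : Shell σ D lv) [Finite V] {b : Bs m} {v : V} (hv : Rel σ D v b)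
    (h : (tog σ D v b).Nonempty) :
    ee b - kd (FK σ) (hop σ D (ee b)) - hop σ D (kd (FK σ) (ee b)) ∈ Fil σ lv (lv v + 1) := by
  set i := (tog σ D v b).min' h with hi
  have him : i ∈ tog σ D v b := Finset.min'_mem _ h
  have hiσ : i ∈ σ v := (Finset.mem_filter.1 him).1
  -- the part `h d`
  have key1 : hop σ D (kd (FK σ) (ee b)) - ∑ s ∈ b.1.filter (· ∈ σ v),
      sgS s b.1 • (if i ∈ b.1.erase s then 0 else sgS i (b.1.erase s) •
        ee (insert i (b.1.erase s), b.2 + Finsupp.single s 1 - Finsupp.single i 1))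
      ∈ Fil σ lv (lv v + 1) := by
    have := sh.hop_Fil (sh.kd_mod hv)
    rw [map_sub, map_sum] at this
    convert this using 2
    apply Finset.sum_congr rfl
    intro s hs
    rw [Finset.mem_filter] at hs
    have hm := md_erase hs.1
    have hr := rel_add hv hs.2 (b.1.erase s)
    have ht : tog σ D v (b.1.erase s, b.2 + Finsupp.single s 1) = tog σ D v b := tog_congr hm v
    rw [map_smul, hop_ee, sh.hb_eq hr (by rw [ht]; exact h)]
    have : (tog σ D v (b.1.erase s, b.2 + Finsupp.single s 1)).min' (by rw [ht]; exact h) = i := by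
      rw [hi]; congr 1
    rw [this]
  by_cases hib : i ∈ b.1
  · have h0 : hop σ D (ee b) = 0 := by
      rw [hop_ee, sh.hb_eq hv h, if_pos hib]
    rw [h0, map_zero, sub_zero]
    have hsum : ∑ s ∈ b.1.filter (· ∈ σ v),
      sgS s b.1 • (if i ∈ b.1.erase s then 0 else sgS i (b.1.erase s) •
        ee (insert i (b.1.erase s), b.2 + Finsupp.single s 1 - Finsupp.single i 1)) = ee b := by
      rw [Finset.sum_eq_single i]
      · simp only [Finset.mem_erase, ne_eq, not_true, false_and, if_false, smul_smul]
        rw [sgS_erase_self _ _ hib, sgS_mul_self, one_smul, Finset.insert_erase hib,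
          add_tsub_cancel_right]
      · intro s hs hne
        rw [if_pos (Finset.mem_erase.2 ⟨hne.symm, hib⟩), smul_zero]
      · intro hn
        exact absurd (Finset.mem_filter.2 ⟨hib, hiσ⟩) hn
    rw [hsum] at key1
    have := Submodule.neg_mem _ key1
    rwa [neg_sub] at this
  · obtain ⟨hf, hr⟩ := tog_toggle hv him hib
    have h0 : hop σ D (ee b) = sgS i b.1 • ee (insert i b.1, b.2 - Finsupp.single i 1) := by
      rw [hop_ee, sh.hb_eq hv h, if_neg hib]
    have key2 := Submodule.smul_mem _ (sgS i b.1) (sh.kd_mod hr)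
    simp only at key2
    rw [Finset.filter_insert, if_pos hiσ, Finset.sum_insert (by simp [hib]), smul_sub, smul_add,
      ← map_smul, ← h0] at key2
    have e1 : sgS i b.1 • sgS i (insert i b.1) • ee ((insert i b.1).erase i,
        b.2 - Finsupp.single i 1 + Finsupp.single i 1) = ee b := by
      rw [smul_smul, sgS_insert _ _ _ hib, sg_self, one_mul, sgS_mul_self, one_smul,
        Finset.erase_insert hib, sub_add_single hf]
    rw [e1] at key2
    have e2 : ∑ s ∈ b.1.filter (· ∈ σ v),
      sgS s b.1 • (if i ∈ b.1.erase s then 0 else sgS i (b.1.erase s) •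
        ee (insert i (b.1.erase s), b.2 + Finsupp.single s 1 - Finsupp.single i 1)) =
        - (sgS i b.1 • ∑ s ∈ b.1.filter (· ∈ σ v), sgS s (insert i b.1) •
          ee ((insert i b.1).erase s, b.2 - Finsupp.single i 1 + Finsupp.single s 1)) := by
      rw [Finset.smul_sum, ← Finset.sum_neg_distrib]
      apply Finset.sum_congr rfl
      intro s hs
      have hs1 := (Finset.mem_filter.1 hs).1
      have hne : i ≠ s := by rintro rfl; exact hib hs1
      rw [if_neg (by simp [hib]), add_sub_single_comm hf,
        Finset.erase_insert_of_ne hne, smul_smul, smul_smul, ← neg_smul]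
      congr 1
      rw [sgS_insert _ _ _ hib, sgS_erase i s b.1 hs1]
      have := sg_swap hne
      linear_combination (sgS s b.1 * sgS i (b.1.erase s)) * this
    rw [e2] at key1
    have := Submodule.neg_mem _ (Submodule.add_mem _ key1 key2)
    convert this using 1
    abel

lemma tog_empty {b : Bs m} {v : V} (hv : Rel σ D v b) (h : ¬ (tog σ D v b).Nonempty) :
    b.2.support = D v ∧ (∀ i ∈ D v, b.2 i = 1) ∧ Disjoint b.1 (σ v) := by
  have h' : ∀ i ∈ σ v, ¬ (2 ≤ md b i ∨ (i ∉ D v ∧ 1 ≤ md b i)) := by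
    intro i hi hc
    exact h ⟨i, Finset.mem_filter.2 ⟨hi, hc⟩⟩
  unfold md at h'
  refine ⟨?_, ?_, ?_⟩
  · apply Finset.Subset.antisymm _ hv.1
    intro i hi
    by_contra hD
    have := h' i (hv.2 hi)
    have h3 := Finsupp.mem_support_iff.1 hi
    exact this (Or.inr ⟨hD, by omega⟩)
  · intro i hi
    have h2 := hv.1 hi
    have := h' i (hv.2 h2)
    have h3 := Finsupp.mem_support_iff.1 h2
    have : ¬ 2 ≤ b.2 i := fun hc => this (Or.inl (by omega))
    omega
  · rw [Finset.disjoint_left]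
    intro i hi hiσ
    have := h' i hiσ
    simp only [hi, if_true] at this
    by_cases hD : i ∈ D v
    · have h3 := Finsupp.mem_support_iff.1 (hv.1 hD)
      exact this (Or.inl (by omega))
    · exact this (Or.inr ⟨hD, by omega⟩)

lemma Shell.kd_crit (sh : Shell σ D lv) {b : Bs m} {v : V} (hv : Rel σ D v b)
    (h : ¬ (tog σ D v b).Nonempty) : kd (FK σ) (ee b) ∈ Fil σ lv (lv v + 1) := by
  have := sh.kd_mod hv
  have h2 := (tog_empty hv h).2.2
  rwa [Finset.filter_eq_empty_iff.2, Finset.sum_empty, sub_zero] at this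
  intro x hx
  exact Finset.disjoint_left.1 h2 hx

end

section
variable {V : Type} {σ D : V → Finset (Fin m)} {lv : V → ℤ}

lemma FK_mono {τ ρ : Finset (Fin m)} (h : τ ⊆ ρ) (hρ : FK σ ρ) : FK σ τ := by
  obtain ⟨v, hv⟩ := hρ
  exact ⟨v, h.trans hv⟩

lemma sum_antisymm {M : Type} [AddCommGroup M] [Module ℚ M] (S : Finset (Fin m))
    (g : Fin m → Fin m → M) (hg : ∀ s ∈ S, ∀ t ∈ S, s ≠ t → g s t = - g t s) :
    ∑ s ∈ S, ∑ t ∈ S.erase s, g s t = 0 := by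
  have h1 : ∑ s ∈ S, ∑ t ∈ S.erase s, g s t = ∑ s ∈ S, ∑ t ∈ S, if s = t then 0 else g s t := by
    apply Finset.sum_congr rfl
    intro s hs
    rw [← Finset.filter_ne, Finset.sum_filter]
    apply Finset.sum_congr rfl
    intro t ht
    by_cases h : s = t <;> simp [h]
  have h2 : ∑ s ∈ S, ∑ t ∈ S, (if s = t then 0 else g s t) =
      - ∑ s ∈ S, ∑ t ∈ S, (if s = t then 0 else g s t) := by
    conv_lhs => rw [Finset.sum_comm]
    rw [← Finset.sum_neg_distrib]
    apply Finset.sum_congr rfl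
    intro s hs
    rw [← Finset.sum_neg_distrib]
    apply Finset.sum_congr rfl
    intro t ht
    by_cases h : s = t
    · simp [h]
    · rw [if_neg h, if_neg (Ne.symm h), hg t ht s hs (Ne.symm h)]
  rw [h1]
  have h3 : (2 : ℚ) • ∑ s ∈ S, ∑ t ∈ S, (if s = t then 0 else g s t) = 0 := by
    rw [two_smul]
    nth_rewrite 1 [h2]
    simp
  exact (smul_eq_zero.1 h3).resolve_left (by norm_num)

lemma ch_ext {M : Type} [AddCommGroup M] [Module ℚ M] {f g : Ch m →ₗ[ℚ] M}
    (h : ∀ b, f (ee b) = g (ee b)) : f = g :=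
  Finsupp.lhom_ext' fun b => LinearMap.ext_ring (h b)

lemma kd_kd (x : Ch m) : kd (FK σ) (kd (FK σ) x) = 0 := by
  have : (kd (FK σ)).comp (kd (FK σ)) = 0 := by
    apply ch_ext
    intro b
    rw [LinearMap.comp_apply, kd_ee, map_sum, LinearMap.zero_apply]
    refine Eq.trans ?_ (sum_antisymm b.1 (fun s t => if FK σ (insert t (insert s b.2.support)) then
      (sgS s b.1 * sgS t (b.1.erase s)) • ee ((b.1.erase s).erase t,
        b.2 + Finsupp.single s 1 + Finsupp.single t 1) else 0) ?_)
    · apply Finset.sum_congr rfl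
      intro s hs
      split_ifs with hK
      · rw [map_smul, kd_ee, Finset.smul_sum]
        apply Finset.sum_congr rfl
        intro t ht
        simp only [supp_add]
        split_ifs
        · rw [smul_smul]
        · simp
      · rw [map_zero]
        symm
        apply Finset.sum_eq_zero
        intro t ht
        rw [if_neg]
        exact fun h => hK (FK_mono (Finset.subset_insert _ _) h)
    · intro s hs t ht hst
      rw [Finset.insert_comm, Finset.erase_right_comm, add_right_comm]
      split_ifs
      · rw [← neg_smul]
        congr 1
        rw [sgS_erase s t b.1 ht, sgS_erase t s b.1 hs]
        have e1 : sgS s (b.1.erase t) = sgS s ((b.1.erase t).erase s) :=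
          (sgS_erase_self _ _ (by simp [hs, hst])).symm
        have := sg_swap hst
        have h2 := sg_mul_self s t
        have h3 := sg_mul_self t s
        have h4 : sg s t = - sg t s := by
          linear_combination (sg t s) * this - sg s t * h3
        rw [h4]; ring
      · simp
  exact LinearMap.congr_fun this x

lemma Fil_induction {k : ℤ} (p : Ch m →ₗ[ℚ] Ch m) (N : Submodule ℚ (Ch m))
    (h : ∀ c : Bs m, FK σ c.2.support → (∀ w, c.2.support ⊆ σ w → k ≤ lv w) → p (ee c) ∈ N)
    {x : Ch m} (hx : x ∈ Fil σ lv k) : p x ∈ N := by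
  have : Fil σ lv k ≤ N.comap p := by
    apply Submodule.span_le.2
    rintro g ⟨c, h1, h2, rfl⟩
    exact h c h1 h2
  exact this hx

lemma kd_Fil {k : ℤ} {x : Ch m} (hx : x ∈ Fil σ lv k) : kd (FK σ) x ∈ Fil σ lv k := by
  refine Fil_induction _ _ ?_ hx
  intro c h1 h2
  rw [kd_ee]
  apply Submodule.sum_mem
  intro s hs
  split_ifs with hK
  · apply Submodule.smul_mem
    apply ee_mem_Fil
    · rw [supp_add]; exact hK
    · intro w hw
      rw [supp_add] at hw
      exact h2 w ((Finset.subset_insert _ _).trans hw)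
  · exact Submodule.zero_mem _

lemma mem_Fil_iff {k : ℤ} {x : Ch m} : x ∈ Fil σ lv k ↔ ∀ c ∈ x.support, FK σ c.2.support ∧
    (∀ w, c.2.support ⊆ σ w → k ≤ lv w) := by
  have : Fil σ lv k = Finsupp.supported ℚ ℚ {c : Bs m | FK σ c.2.support ∧
    (∀ w, c.2.support ⊆ σ w → k ≤ lv w)} := by
    rw [Finsupp.supported_eq_span_single]
    unfold Fil
    congr 1
    ext g
    constructor
    · rintro ⟨c, h1, h2, rfl⟩; exact ⟨c, ⟨h1, h2⟩, rfl⟩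
    · rintro ⟨c, ⟨h1, h2⟩, rfl⟩; exact ⟨c, h1, h2, rfl⟩
  rw [this, Finsupp.mem_supported]
  rfl

/-- the homotopy defect -/
def defect (σ D : V → Finset (Fin m)) (x : Ch m) : Ch m :=
  x - kd (FK σ) (hop σ D x) - hop σ D (kd (FK σ) x)

/-- linear version -/
def defectL (σ D : V → Finset (Fin m)) : Ch m →ₗ[ℚ] Ch m :=
  LinearMap.id - (kd (FK σ)).comp (hop σ D) - (hop σ D).comp (kd (FK σ))

lemma defectL_apply (x : Ch m) : defectL σ D x = defect σ D x := rfl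

lemma Shell.defect_basis (sh : Shell σ D lv) [Finite V] {k : ℤ} {c : Bs m} {v : V}
    (hv : Rel σ D v c) (hk : k ≤ lv v) (h : k < lv v ∨ (tog σ D v c).Nonempty) :
    defect σ D (ee c) ∈ Fil σ lv (k + 1) := by
  rcases h with h | h
  · have h1 : ee c ∈ Fil σ lv (k + 1) := Fil_mono h (sh.ee_mem_of_rel hv)
    exact Submodule.sub_mem _ (Submodule.sub_mem _ h1 (kd_Fil (sh.hop_Fil h1)))
      (sh.hop_Fil (kd_Fil h1))
  · exact Fil_mono (by omega) (sh.homotopy hv h)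

lemma Shell.defect_mem (sh : Shell σ D lv) [Finite V] {k : ℤ} {x : Ch m} (hx : x ∈ Fil σ lv k)
    (h : ∀ c ∈ x.support, ∀ v, Rel σ D v c → lv v = k → (tog σ D v c).Nonempty) :
    defect σ D x ∈ Fil σ lv (k + 1) := by
  rw [← defectL_apply]
  conv => enter [2]; rw [← Finsupp.sum_single x]
  rw [Finsupp.sum, map_sum]
  apply Submodule.sum_mem
  intro c hc
  have h1 := mem_Fil_iff.1 hx c hc
  obtain ⟨v, hv⟩ := sh.exists_rel h1.1
  have h2 := h1.2 v hv.2
  have : Finsupp.single c (x c) = x c • ee c := by simp [ee]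
  rw [this, map_smul, defectL_apply]
  apply Submodule.smul_mem
  apply sh.defect_basis hv h2
  rcases h2.lt_or_eq with h3 | h3
  · left; exact h3
  · right; exact h c hc v hv h3.symm

/-- indicator exponent -/
def ind (τ : Finset (Fin m)) : Fin m →₀ ℕ :=
  Finsupp.onFinset τ (fun i => if i ∈ τ then 1 else 0) (by intro i; simp)

lemma ind_apply (τ : Finset (Fin m)) (i : Fin m) : ind τ i = if i ∈ τ then 1 else 0 := rfl

lemma ind_support (τ : Finset (Fin m)) : (ind τ).support = τ := by
  ext i; simp [ind_apply]

lemma ind_insert {τ : Finset (Fin m)} {s : Fin m} (h : s ∉ τ) :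
    ind (insert s τ) = ind τ + Finsupp.single s 1 := by
  ext i
  simp only [ind_apply, Finsupp.add_apply, Finsupp.single_apply, Finset.mem_insert]
  by_cases hi : s = i
  · subst hi; simp [h]
  · simp [hi, Ne.symm hi]

/-- multidegree one part -/
def W1 (m : ℕ) : Submodule ℚ (Ch m) := Finsupp.supported ℚ ℚ {c : Bs m | md c = fun _ => 1}

lemma ee_mem_W1 {c : Bs m} (h : md c = fun _ => 1) : ee c ∈ W1 m :=
  Finsupp.single_mem_supported ℚ 1 h

lemma W1_induction (p : Ch m →ₗ[ℚ] Ch m) (N : Submodule ℚ (Ch m))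
    (h : ∀ c : Bs m, md c = (fun _ => 1) → p (ee c) ∈ N)
    {x : Ch m} (hx : x ∈ W1 m) : p x ∈ N := by
  have : W1 m ≤ N.comap p := by
    unfold W1
    rw [Finsupp.supported_eq_span_single]
    apply Submodule.span_le.2
    rintro g ⟨c, h1, rfl⟩
    exact h c h1
  exact this hx

lemma kd_W1 {x : Ch m} (hx : x ∈ W1 m) : kd (FK σ) x ∈ W1 m := by
  refine W1_induction _ _ ?_ hx
  intro c h1
  rw [kd_ee]
  apply Submodule.sum_mem
  intro s hs
  split_ifs
  · exact Submodule.smul_mem _ _ (ee_mem_W1 (by rw [md_erase hs, h1]))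
  · exact Submodule.zero_mem _

lemma Shell.hop_W1 (sh : Shell σ D lv) {x : Ch m} (hx : x ∈ W1 m) : hop σ D x ∈ W1 m := by
  refine W1_induction _ _ ?_ hx
  intro c h1
  rw [hop_ee]
  by_cases h : ∃ v, Rel σ D v c
  · obtain ⟨v, hv⟩ := h
    rcases sh.hb_cases hv with h | ⟨q, d, h, -, -, h2⟩
    · rw [h]; exact Submodule.zero_mem _
    · rw [h]; exact Submodule.smul_mem _ _ (ee_mem_W1 (by rw [h2, h1]))
  · unfold hb
    rw [dif_neg]
    · exact Submodule.zero_mem _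
    · rintro ⟨v, hv, -⟩; exact h ⟨v, hv⟩

lemma md_facet (τ : Finset (Fin m)) : md (τᶜ, ind τ) = fun _ => 1 := by
  funext i
  by_cases h : i ∈ τ <;> simp [md, ind_apply, h]

lemma eq_of_md_one {b : Bs m} (h : md b = fun _ => 1) : b = ((b.2.support)ᶜ, ind b.2.support) := by
  have h' : ∀ i, b.2 i + (if i ∈ b.1 then 1 else 0) = 1 := fun i => congrFun h i
  ext i
  · simp only [Finset.mem_compl, Finsupp.mem_support_iff]
    have := h' i
    split_ifs at this with hi
    · simp [hi]; omega
    · simp [hi]; omega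
  · simp only [ind_apply, Finsupp.mem_support_iff]
    have := h' i
    split_ifs at this ⊢ <;> omega

lemma Shell.top_not_mem (sh : Shell σ D lv) (sh' : Shell σ (fun v => σ v \ D v) (fun v => - lv v))
    [Finite V] (N : V) (hN : ∀ v, lv v ≤ lv N) {k : ℤ} (hk : k ≤ lv N) :
    ∀ x, x ∈ Fil σ lv k → x ∈ W1 m → kd (FK σ) x ≠ ee ((σ N)ᶜ, ind (σ N)) := by
  have hUN : ∀ v, σ v \ D v = ∅ → v = N := by
    intro v hv
    by_contra hne
    have := sh'.a1 v N ∅ (by simp [hv]) (by simp) (by simp) (Ne.symm hne)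
    have := hN v
    omega
  have hUN2 : σ N \ D N = ∅ := by
    by_contra hne
    obtain ⟨w, -, hw⟩ := sh'.a2 N ∅ (by simp) (by simpa using hne)
    have := hN w
    omega
  have hDN : D N = σ N :=
    Finset.Subset.antisymm (sh.sub N) (Finset.sdiff_eq_empty_iff_subset.1 hUN2)
  have hRN : Rel σ D N ((σ N)ᶜ, ind (σ N)) := by
    simp [Rel, ind_support, hDN]
  have htN : ¬ (tog σ D N ((σ N)ᶜ, ind (σ N))).Nonempty := by
    rintro ⟨i, hi⟩
    replace hi := Finset.mem_filter.1 hi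
    rw [md_facet, hDN] at hi
    rcases hi.2 with h | h
    · simp at h
    · exact h.1 hi.1
  obtain ⟨d, hd⟩ := Int.le.dest hk
  induction d generalizing k with
  | zero =>
    have hk' : k = lv N := by simpa using hd
    intro x hx hx1 he
    have h0 : kd (FK σ) x = 0 := by
      have hx' : ∀ c ∈ x.support, kd (FK σ) (ee c) = 0 := by
        intro c hc
        obtain ⟨h1, h2⟩ := mem_Fil_iff.1 hx c hc
        have h3 : md c = fun _ => 1 := hx1 hc
        obtain ⟨v, hv⟩ := sh.exists_rel h1
        have hvN : v = N := by
          by_contra hne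
          have h4 := h2 v hv.2
          have := sh'.a1 N v ∅ (by simp [hUN2]) (by simp) (by simp) hne
          omega
        subst hvN
        rw [kd_ee]
        apply Finset.sum_eq_zero
        intro s hs
        rw [if_neg]
        rintro ⟨w, hw⟩
        have hsup : c.2.support = σ v := Finset.Subset.antisymm hv.2 (hDN ▸ hv.1)
        rw [hsup] at hw
        have hsv : s ∉ σ v := by
          intro hc2
          rw [← hsup, Finsupp.mem_support_iff] at hc2
          have := congrFun h3 s
          simp [md, hs] at this
          exact hc2 this
        have hwv : w ≠ v := by
          rintro rfl; exact hsv (hw (Finset.mem_insert_self _ _))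
        have := sh.a1 v w (σ v) (sh.sub v) subset_rfl ((Finset.subset_insert _ _).trans hw) hwv
        have := hN w
        omega
      rw [← Finsupp.sum_single x, Finsupp.sum, map_sum]
      apply Finset.sum_eq_zero
      intro c hc
      have : Finsupp.single c (x c) = x c • ee c := by simp [ee]
      rw [this, map_smul, hx' c hc, smul_zero]
    rw [h0] at he
    have := congrArg (fun y : Ch m => y ((σ N)ᶜ, ind (σ N))) he
    simp [ee] at this
  | succ d ih =>
    intro x hx hx1 he
    have hlt : k < lv N := by push_cast at hd; omega
    have hmem : defect σ D x ∈ Fil σ lv (k + 1) := by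
      apply sh.defect_mem hx
      intro c hc v hv hvk
      by_contra ht
      obtain ⟨t1, t2, t3⟩ := tog_empty hv ht
      have h3 : md c = fun _ => 1 := hx1 hc
      have : v = N := by
        apply hUN
        rw [Finset.sdiff_eq_empty_iff_subset]
        intro i hi
        by_contra hiD
        have h4 := congrFun h3 i
        have h5 : i ∉ c.1 := fun h => Finset.disjoint_left.1 t3 h hi
        have h6 : c.2 i = 0 := by
          by_contra h7
          exact hiD (t1 ▸ Finsupp.mem_support_iff.2 h7)
        simp [md, h5, h6] at h4
      subst this
      omega
    refine ih (k := k + 1) (by omega) (by push_cast at hd ⊢; omega) (defect σ D x) hmem ?_ ?_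
    · exact Submodule.sub_mem _ (Submodule.sub_mem _ hx1 (kd_W1 (sh.hop_W1 hx1)))
        (sh.hop_W1 (kd_W1 hx1))
    · unfold defect
      rw [he, hop_ee, sh.hb_of_empty hRN htN, sub_zero, map_sub, kd_kd, sub_zero, he]

/-- Existence of the orientation functional. -/
lemma Shell.exists_or (sh : Shell σ D lv)
    (sh' : Shell σ (fun v => σ v \ D v) (fun v => - lv v)) {n : ℕ} (hcard : ∀ v, (σ v).card = n)
    [Finite V] [Nonempty V] : ∃ φ : Ch m →ₗ[ℚ] ℚ,
      (∀ b : Bs m, FK σ b.2.support → md b = (fun _ => 1) → φ (kd (FK σ) (ee b)) = 0) ∧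
      ∀ v, φ (ee ((σ v)ᶜ, ind (σ v))) ≠ 0 := by
  obtain ⟨N, hN⟩ := Finite.exists_max lv
  obtain ⟨N0, hN0⟩ := Finite.exists_min lv
  set R := Submodule.map (kd (FK σ)) (Fil σ lv (lv N0) ⊓ W1 m) with hR
  have hnot : ee ((σ N)ᶜ, ind (σ N)) ∉ R := by
    rintro ⟨x, ⟨hx, hx1⟩, he⟩
    exact sh.top_not_mem sh' N hN (hN N0) x hx hx1 he
  obtain ⟨φ, hφ, hφR⟩ := Submodule.exists_le_ker_of_notMem hnot
  have p1 : ∀ b : Bs m, FK σ b.2.support → md b = (fun _ => 1) → φ (kd (FK σ) (ee b)) = 0 := by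
    intro b hb hm
    apply hφR
    exact ⟨ee b, ⟨ee_mem_Fil hb fun w _ => hN0 w, ee_mem_W1 hm⟩, rfl⟩
  refine ⟨φ, p1, ?_⟩
  -- descending induction on the level
  have main : ∀ d : ℕ, ∀ v, lv N - lv v ≤ d → φ (ee ((σ v)ᶜ, ind (σ v))) ≠ 0 := by
    intro d
    induction d with
    | zero =>
      intro v hv
      have : v = N := by
        by_contra hne
        have h1 : ¬ (σ v \ D v) ⊆ ∅ := by
          intro hU
          have := sh'.a1 v N ∅ hU (by simp) (by simp) (Ne.symm hne)
          have := hN v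
          push_cast at hv
          omega
        obtain ⟨w, -, hw⟩ := sh'.a2 v ∅ (by simp) h1
        have := hN w
        push_cast at hv
        omega
      rw [this]; exact hφ
    | succ d ih =>
      intro v hv
      by_cases hvN : v = N
      · rw [hvN]; exact hφ
      have hU : (σ v \ D v).Nonempty := by
        rw [Finset.nonempty_iff_ne_empty]
        intro hU
        have := sh'.a1 v N ∅ (by simp [hU]) (by simp) (by simp) (Ne.symm hvN)
        have := hN v
        omega
      obtain ⟨i, hi⟩ := hU
      rw [Finset.mem_sdiff] at hi
      set ρ := (σ v).erase i with hρ
      have hρv : ρ ⊆ σ v := Finset.erase_subset _ _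
      have hDρ : D v ⊆ ρ := by
        intro j hj
        exact Finset.mem_erase.2 ⟨by rintro rfl; exact hi.2 hj, sh.sub v hj⟩
      obtain ⟨w, hw, hmax⟩ := Set.exists_max_image {w | ρ ⊆ σ w} lv (Set.toFinite _) ⟨v, hρv⟩
      have hwv : lv v < lv w := by
        obtain ⟨u, hu, hlt⟩ := sh'.a2 v ρ hρv (by
          intro h
          have := h (Finset.mem_sdiff.2 hi)
          simp [hρ] at this)
        have := hmax u hu
        omega
      have hwU : σ w \ D w ⊆ ρ := by
        by_contra hc
        obtain ⟨u, hu, hlt⟩ := sh'.a2 w ρ hw hc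
        have := hmax u hu
        omega
      have hcρ : ρ.card = n - 1 := by rw [hρ, Finset.card_erase_of_mem hi.1, hcard]
      have hn : 1 ≤ n := by
        rw [← hcard v]; exact Finset.card_pos.2 ⟨i, hi.1⟩
      obtain ⟨j, hj⟩ : ∃ j, j ∈ σ w \ ρ := by
        by_contra hne
        push Not at hne
        have : σ w ⊆ ρ := fun x hx => by
          by_contra hx2; exact hne x (Finset.mem_sdiff.2 ⟨hx, hx2⟩)
        have := Finset.card_le_card this
        rw [hcard] at this
        omega
      rw [Finset.mem_sdiff] at hj
      have hiρ : i ∉ ρ := by simp [hρ]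
      have hσv : insert i ρ = σ v := Finset.insert_erase hi.1
      have ins : ∀ (u : V) (s : Fin m), s ∉ ρ → insert s ρ ⊆ σ u → insert s ρ = σ u := by
        intro u s hs h
        apply Finset.eq_of_subset_of_card_le h
        rw [hcard, Finset.card_insert_of_notMem hs]
        omega
      have hσw : insert j ρ = σ w := ins w j hj.2 (Finset.insert_subset hj.1 hw)
      have hij : i ≠ j := by
        rintro rfl
        have := sh.a1 v w (σ v) (sh.sub v) subset_rfl (by rw [← hσw, hσv])
          (by rintro rfl; omega)
        have h2 := sh.a1 w v (σ w) (sh.sub w) subset_rfl (by rw [← hσw, hσv])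
          (by rintro rfl; omega)
        omega
      have hrel := p1 (ρᶜ, ind ρ) (by rw [ind_support]; exact ⟨v, hρv⟩) (md_facet ρ)
      rw [kd_ee, map_sum] at hrel
      simp only [ind_support] at hrel
      have hother : ∀ s ∈ ρᶜ, s ≠ i ∧ s ≠ j → φ (if FK σ (insert s ρ) then
          sgS s ρᶜ • ee (ρᶜ.erase s, ind ρ + Finsupp.single s 1) else 0) = 0 := by
        intro s hs hne
        rw [if_neg, map_zero]
        rintro ⟨u, hu⟩
        have hs' : s ∉ ρ := by simpa using hs
        have hu2 : ρ ⊆ σ u := (Finset.subset_insert _ _).trans hu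
        have huv : u ≠ v := by
          rintro rfl
          have := hu (Finset.mem_insert_self _ _)
          rw [← hσv, Finset.mem_insert] at this
          exact this.elim hne.1 hs'
        have huw : u ≠ w := by
          rintro rfl
          have := hu (Finset.mem_insert_self _ _)
          rw [← hσw, Finset.mem_insert] at this
          exact this.elim hne.2 hs'
        have hsu := ins u s hs' hu
        by_cases hsD : s ∈ D u
        · have hUu : σ u \ D u ⊆ ρ := by
            intro x hx
            rw [Finset.mem_sdiff, ← hsu, Finset.mem_insert] at hx
            rcases hx.1 with h | h
            · subst h; exact absurd hsD hx.2
            · exact h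
          have h1 := sh'.a1 u w ρ hUu hu2 hw huw.symm
          have h2 := sh'.a1 w u ρ hwU hw hu2 huw
          omega
        · have hDu : D u ⊆ ρ := by
            intro x hx
            have hx2 := sh.sub u hx
            rw [← hsu, Finset.mem_insert] at hx2
            rcases hx2 with h | h
            · subst h; exact absurd hx hsD
            · exact h
          have h1 := sh.a1 u v ρ hDu hu2 hρv huv.symm
          have h2 := sh.a1 v u ρ hDρ hρv hu2 huv
          omega
      rw [← Finset.sum_subset (s₁ := {i, j}) (by
          intro x hx
          simp only [Finset.mem_insert, Finset.mem_singleton] at hx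
          rcases hx with rfl | rfl
          · simpa using hiρ
          · simpa using hj.2)
        (by
          intro s hs hns
          simp only [Finset.mem_insert, Finset.mem_singleton, not_or] at hns
          exact hother s hs hns), Finset.sum_pair hij] at hrel
      rw [hσv, hσw, if_pos ⟨v, subset_rfl⟩, if_pos ⟨w, subset_rfl⟩, ← ind_insert hiρ,
        ← ind_insert hj.2, hσv, hσw, ← Finset.compl_insert, ← Finset.compl_insert, hσv, hσw,
        map_smul, map_smul] at hrel
      intro h0
      rw [h0, smul_zero, zero_add, smul_eq_zero] at hrel
      rcases hrel with h | h
      · exact sgS_ne _ _ h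
      · exact ih w (by push_cast at hv; omega) h
  intro v
  exact main (lv N - lv v).toNat v (by omega)

end

section
variable {V : Type} {σ D : V → Finset (Fin m)} {lv : V → ℤ}

/-- An orientation functional supported on facets. -/
structure IsOr (σ : V → Finset (Fin m)) (E : Ch m →ₗ[ℚ] ℚ) : Prop where
  bd : ∀ b : Bs m, E (kd (FK σ) (ee b)) = 0
  fac : ∀ b : Bs m, E (ee b) ≠ 0 → ∃ v, b = ((σ v)ᶜ, ind (σ v))
  ne : ∀ v, E (ee ((σ v)ᶜ, ind (σ v))) ≠ 0

lemma Shell.exists_isOr (sh : Shell σ D lv)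
    (sh' : Shell σ (fun v => σ v \ D v) (fun v => - lv v)) {n : ℕ} (hcard : ∀ v, (σ v).card = n)
    [Finite V] [Nonempty V] : ∃ E : Ch m →ₗ[ℚ] ℚ, IsOr σ E := by
  obtain ⟨φ, h1, h2⟩ := sh.exists_or sh' hcard
  set E : Ch m →ₗ[ℚ] ℚ := Finsupp.linearCombination ℚ
    (fun b : Bs m => if ∃ v, b = ((σ v)ᶜ, ind (σ v)) then φ (ee b) else 0) with hE
  have hEe : ∀ b, E (ee b) = if ∃ v, b = ((σ v)ᶜ, ind (σ v)) then φ (ee b) else 0 := by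
    intro b
    simp [hE, ee, Finsupp.linearCombination_single]
  refine ⟨E, ?_, ?_, ?_⟩
  · intro b
    rw [kd_ee, map_sum]
    by_cases hb : FK σ b.2.support ∧ md b = (fun _ => 1) ∧ b.2.support.card + 1 = n
    · obtain ⟨hb1, hb2, hb3⟩ := hb
      rw [← h1 b hb1 hb2, kd_ee, map_sum]
      apply Finset.sum_congr rfl
      intro s hs
      split_ifs with hK
      · rw [map_smul, map_smul, hEe, if_pos]
        obtain ⟨v, hv⟩ := hK
        refine ⟨v, ?_⟩
        have hm := md_erase hs
        rw [hb2] at hm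
        have := eq_of_md_one hm
        rw [this]
        simp only [supp_add]
        have hns : s ∉ b.2.support := by
          have := congrFun hb2 s
          simp [md, hs] at this
          simp [this]
        have : insert s b.2.support = σ v := by
          apply Finset.eq_of_subset_of_card_le hv
          rw [hcard, Finset.card_insert_of_notMem hns, hb3]
        rw [this]
      · simp
    · apply Finset.sum_eq_zero
      intro s hs
      split_ifs with hK
      · rw [map_smul, hEe, if_neg, smul_zero]
        rintro ⟨v, hv⟩
        apply hb
        have hmb : md b = fun _ => 1 := by
          rw [← md_erase hs, hv, md_facet]
        refine ⟨FK_mono (Finset.subset_insert _ _) hK, hmb, ?_⟩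
        have hns : s ∉ b.2.support := by
          have := congrFun hmb s
          simp [md, hs] at this
          simp [this]
        have h3 : insert s b.2.support = σ v := by
          have h4 : b.2 + Finsupp.single s 1 = ind (σ v) := (Prod.ext_iff.1 hv).2
          rw [← supp_add, h4, ind_support]
        rw [← hcard v, ← h3, Finset.card_insert_of_notMem hns]
      · simp
  · intro b hb
    by_contra hne
    rw [hEe, if_neg hne] at hb
    exact hb rfl
  · intro v
    rw [hEe, if_pos ⟨v, rfl⟩]
    exact h2 v

/-- sign of a shuffle -/
def sgT (S T : Finset (Fin m)) : ℚ := ∏ s ∈ S, sgS s T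

lemma sgT_ne (S T : Finset (Fin m)) : sgT S T ≠ 0 :=
  Finset.prod_ne_zero_iff.2 fun s _ => sgS_ne s T

lemma sgT_left {S T : Finset (Fin m)} {s : Fin m} (h : s ∈ S) :
    sgT S T = sgS s T * sgT (S.erase s) T := by
  unfold sgT; exact (Finset.mul_prod_erase S (fun s => sgS s T) h).symm

lemma sgT_right {S T : Finset (Fin m)} {t : Fin m} (h : t ∈ T) :
    sgT S T = (∏ s ∈ S, sg s t) * sgT S (T.erase t) := by
  unfold sgT
  rw [← Finset.prod_mul_distrib]
  apply Finset.prod_congr rfl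
  intro s hs
  exact sgS_erase s t T h

lemma prod_swap {S : Finset (Fin m)} {t : Fin m} (h : t ∉ S) :
    (∏ s ∈ S, sg s t) * sgS t S = (-1) ^ S.card := by
  unfold sgS
  rw [← Finset.prod_mul_distrib, Finset.prod_congr rfl (g := fun _ => -1), Finset.prod_const]
  intro s hs
  exact sg_swap (by rintro rfl; exact h hs)

lemma sgS_union {S T : Finset (Fin m)} (s : Fin m) (h : Disjoint S T) :
    sgS s (S ∪ T) = sgS s S * sgS s T := by
  unfold sgS; rw [Finset.prod_union h]

/-- reversal sign -/
def eta (p : ℕ) : ℚ := (-1) ^ (p.choose 2)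

lemma eta_succ (p : ℕ) : eta (p + 1) = (-1) ^ p * eta p := by
  unfold eta
  rw [Nat.choose_succ_succ' p 1, pow_add, Nat.choose_one_right]

lemma eta_ne (p : ℕ) : eta p ≠ 0 := pow_ne_zero _ (by norm_num)

/-- pairing on basis elements -/
def pb (E : Ch m →ₗ[ℚ] ℚ) (b c : Bs m) : ℚ :=
  if Disjoint b.1 c.1 then eta b.1.card * sgT b.1 c.1 * E (ee (b.1 ∪ c.1, b.2 + c.2)) else 0

/-- the pairing -/
def Bl (E : Ch m →ₗ[ℚ] ℚ) : Ch m →ₗ[ℚ] Ch m →ₗ[ℚ] ℚ :=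
  Finsupp.linearCombination ℚ (fun b => Finsupp.linearCombination ℚ (fun c => pb E b c))

lemma Bl_ee (E : Ch m →ₗ[ℚ] ℚ) (b c : Bs m) : Bl E (ee b) (ee c) = pb E b c := by
  simp [Bl, ee, Finsupp.linearCombination_single]

lemma IsOr.pb_ne {E : Ch m →ₗ[ℚ] ℚ} (hE : IsOr σ E) {b c : Bs m} (h : pb E b c ≠ 0) :
    Disjoint b.1 c.1 ∧ ∃ w, b.1 ∪ c.1 = (σ w)ᶜ ∧ b.2 + c.2 = ind (σ w) := by
  unfold pb at h
  split_ifs at h with hd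
  · refine ⟨hd, ?_⟩
    obtain ⟨v, hv⟩ := hE.fac _ (right_ne_zero_of_mul h)
    exact ⟨v, (Prod.ext_iff.1 hv).1, (Prod.ext_iff.1 hv).2⟩
  · exact absurd rfl h

lemma supp_le_of_add {f g : Fin m →₀ ℕ} {τ : Finset (Fin m)} (h : f + g = ind τ) :
    f.support ⊆ τ ∧ g.support ⊆ τ := by
  have h' : ∀ i, f i + g i = if i ∈ τ then 1 else 0 := fun i => DFunLike.congr_fun h i
  constructor
  all_goals
    intro i hi
    by_contra hn
    have := h' i
    rw [if_neg hn] at this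
    rw [Finsupp.mem_support_iff] at hi
    omega

lemma IsOr.pb_kd {E : Ch m →ₗ[ℚ] ℚ} (hE : IsOr σ E) (b c : Bs m) :
    Bl E (kd (FK σ) (ee b)) (ee c) = Bl E (ee b) (kd (FK σ) (ee c)) := by
  have hl : Bl E (kd (FK σ) (ee b)) (ee c) = ∑ s ∈ b.1,
      sgS s b.1 * pb E (b.1.erase s, b.2 + Finsupp.single s 1) c := by
    rw [kd_ee, map_sum, LinearMap.sum_apply]
    apply Finset.sum_congr rfl
    intro s hs
    split_ifs with hK
    · rw [map_smul, LinearMap.smul_apply, Bl_ee, smul_eq_mul]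
    · rw [map_zero, LinearMap.zero_apply]
      symm
      rw [mul_eq_zero]; right
      by_contra hne
      obtain ⟨-, w, -, h2⟩ := hE.pb_ne hne
      have := (supp_le_of_add h2).1
      rw [supp_add] at this
      exact hK ⟨w, this⟩
  have hr : Bl E (ee b) (kd (FK σ) (ee c)) = ∑ s ∈ c.1,
      sgS s c.1 * pb E b (c.1.erase s, c.2 + Finsupp.single s 1) := by
    rw [kd_ee, map_sum]
    apply Finset.sum_congr rfl
    intro s hs
    split_ifs with hK
    · rw [map_smul, Bl_ee, smul_eq_mul]
    · rw [map_zero]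
      symm
      rw [mul_eq_zero]; right
      by_contra hne
      obtain ⟨-, w, -, h2⟩ := hE.pb_ne hne
      have := (supp_le_of_add h2).2
      rw [supp_add] at this
      exact hK ⟨w, this⟩
  rw [hl, hr]
  by_cases hd : Disjoint b.1 c.1
  · have hb := hE.bd (b.1 ∪ c.1, b.2 + c.2)
    have hb2 : ∑ s ∈ b.1 ∪ c.1, sgS s (b.1 ∪ c.1) *
        E (ee ((b.1 ∪ c.1).erase s, b.2 + c.2 + Finsupp.single s 1)) = 0 := by
      rw [← hb, kd_ee, map_sum]
      apply Finset.sum_congr rfl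
      intro s hs
      split_ifs with hK
      · rw [map_smul, smul_eq_mul]
      · rw [map_zero, mul_eq_zero]; right
        by_contra hne
        obtain ⟨w, hw⟩ := hE.fac _ hne
        apply hK
        refine ⟨w, ?_⟩
        have h4 : b.2 + c.2 + Finsupp.single s 1 = ind (σ w) := (Prod.ext_iff.1 hw).2
        rw [← supp_add, h4, ind_support]
    rw [Finset.sum_union hd] at hb2
    have e1 : ∑ s ∈ b.1, sgS s b.1 * pb E (b.1.erase s, b.2 + Finsupp.single s 1) c =
        (- eta b.1.card * (-1) ^ b.1.card * sgT b.1 c.1) * ∑ s ∈ b.1, sgS s (b.1 ∪ c.1) *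
        E (ee ((b.1 ∪ c.1).erase s, b.2 + c.2 + Finsupp.single s 1)) := by
      rw [Finset.mul_sum]
      apply Finset.sum_congr rfl
      intro s hs
      have hsc : s ∉ c.1 := Finset.disjoint_left.1 hd hs
      unfold pb
      rw [if_pos (hd.mono_left (Finset.erase_subset _ _))]
      have hu : (b.1 ∪ c.1).erase s = b.1.erase s ∪ c.1 := by
        rw [Finset.erase_union_distrib, Finset.erase_eq_of_notMem hsc]
      rw [hu, add_right_comm, sgT_left hs, sgS_union _ hd]
      have hc : b.1.card = (b.1.erase s).card + 1 := (Finset.card_erase_add_one hs).symm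
      rw [hc, eta_succ, pow_succ]
      have h1 := sgS_mul_self s c.1
      have h2 : ((-1 : ℚ) ^ (b.1.erase s).card) * (-1) ^ (b.1.erase s).card = 1 := by
        rw [← mul_pow]; simp
      simp only
      generalize ((-1 : ℚ) ^ (b.1.erase s).card) = P at *
      generalize E _ = Q
      generalize sgT (b.1.erase s) c.1 = R
      generalize eta _ = T
      generalize sgS s c.1 = U at *
      generalize sgS s b.1 = X
      linear_combination (- X * T * R * Q * U * U) * h2 - (X * T * R * Q) * h1
    have e2 : ∑ s ∈ c.1, sgS s c.1 * pb E b (c.1.erase s, c.2 + Finsupp.single s 1) =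
        (eta b.1.card * (-1) ^ b.1.card * sgT b.1 c.1) * ∑ s ∈ c.1, sgS s (b.1 ∪ c.1) *
        E (ee ((b.1 ∪ c.1).erase s, b.2 + c.2 + Finsupp.single s 1)) := by
      rw [Finset.mul_sum]
      apply Finset.sum_congr rfl
      intro s hs
      have hsb : s ∉ b.1 := Finset.disjoint_right.1 hd hs
      unfold pb
      rw [if_pos (hd.mono_right (Finset.erase_subset _ _))]
      have hu : (b.1 ∪ c.1).erase s = b.1 ∪ c.1.erase s := by
        rw [Finset.erase_union_distrib, Finset.erase_eq_of_notMem hsb]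
      rw [hu, ← add_assoc, sgT_right hs, sgS_union _ hd]
      have h1 := prod_swap hsb
      have h2 : ((-1 : ℚ) ^ b.1.card) * (-1) ^ b.1.card = 1 := by
        rw [← mul_pow]; simp
      simp only
      generalize ((-1 : ℚ) ^ b.1.card) = P at *
      generalize E _ = Q
      generalize sgT b.1 (c.1.erase s) = R
      generalize eta _ = T
      generalize (∏ s' ∈ b.1, sg s' s) = Z at *
      generalize sgS s c.1 = U at *
      generalize sgS s b.1 = X at *
      linear_combination (- T * R * Q * U * P) * h1 - (T * R * Q * U) * h2
    rw [e1, e2]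
    linear_combination (- eta b.1.card * (-1) ^ b.1.card * sgT b.1 c.1) * hb2
  · rw [Finset.sum_eq_zero, Finset.sum_eq_zero]
    · intro s hs
      rw [mul_eq_zero]; right
      by_contra hne
      obtain ⟨h1, w, h2, h3⟩ := hE.pb_ne hne
      apply hd
      rw [Finset.disjoint_left]
      intro i hi hic
      have his : i = s := by
        by_contra h
        exact Finset.disjoint_left.1 h1 hi (Finset.mem_erase.2 ⟨h, hic⟩)
      subst his
      have hw : i ∈ (σ w)ᶜ := by rw [← h2]; exact Finset.mem_union_left _ hi
      have := (supp_le_of_add h3).2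
      rw [supp_add] at this
      exact (Finset.mem_compl.1 hw) (this (Finset.mem_insert_self _ _))
    · intro s hs
      rw [mul_eq_zero]; right
      by_contra hne
      obtain ⟨h1, w, h2, h3⟩ := hE.pb_ne hne
      apply hd
      rw [Finset.disjoint_left]
      intro i hi hic
      have his : i = s := by
        by_contra h
        exact Finset.disjoint_left.1 h1 (Finset.mem_erase.2 ⟨h, hi⟩) hic
      subst his
      have hw : i ∈ (σ w)ᶜ := by rw [← h2]; exact Finset.mem_union_right _ hic
      have := (supp_le_of_add h3).1
      rw [supp_add] at this
      exact (Finset.mem_compl.1 hw) (this (Finset.mem_insert_self _ _))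

lemma IsOr.Bl_kd {E : Ch m →ₗ[ℚ] ℚ} (hE : IsOr σ E) (x y : Ch m) :
    Bl E (kd (FK σ) x) y = Bl E x (kd (FK σ) y) := by
  have : (Bl E).comp (kd (FK σ)) = ((Bl E).flip.comp (kd (FK σ))).flip := by
    apply ch_ext
    intro b
    apply ch_ext
    intro c
    exact hE.pb_kd b c
  exact LinearMap.congr_fun (LinearMap.congr_fun this x) y

lemma crit_tog {S : Finset (Fin m)} {v : V} (hS : Disjoint S (σ v)) :
    ¬ (tog σ D v (S, ind (D v))).Nonempty := by
  rintro ⟨i, hi⟩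
  replace hi := Finset.mem_filter.1 hi
  have : i ∉ S := Finset.disjoint_right.1 hS hi.1
  simp only [md, this, if_false, ind_apply] at hi
  obtain ⟨-, h | h⟩ := hi
  · split_ifs at h <;> omega
  · simp [h.1] at h

lemma pair_crit (sh : Shell σ D lv) (sh' : Shell σ (fun v => σ v \ D v) (fun v => - lv v))
    {E : Ch m →ₗ[ℚ] ℚ} (hE : IsOr σ E) {c b : Bs m} {u v : V} (hu : Rel σ D u c)
    (hv : Rel σ (fun v => σ v \ D v) v b) (hl : lv v ≤ lv u) (hne : pb E c b ≠ 0) :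
    u = v ∧ c = ((b.1 ∪ σ v)ᶜ, ind (D v)) ∧ b.2 = ind (σ v \ D v) ∧ Disjoint b.1 (σ v) := by
  obtain ⟨hd, w, h1, h2⟩ := hE.pb_ne hne
  obtain ⟨h3, h4⟩ := supp_le_of_add h2
  have l1 := sh.rel_le hu h3
  have l2 : -lv v ≤ -lv w := sh'.rel_le hv h4
  have huw : w = u := by
    by_contra h
    have := sh.a1 u w _ hu.1 hu.2 h3 h
    omega
  have hvw : w = v := by
    by_contra h
    have := sh'.a1 v w _ hv.1 hv.2 h4 h
    omega
  subst huw
  subst hvw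
  have hsum : ∀ i, c.2 i + b.2 i = if i ∈ σ w then 1 else 0 := fun i => DFunLike.congr_fun h2 i
  have hc : ∀ i ∈ D w, c.2 i ≠ 0 := fun i hi => Finsupp.mem_support_iff.1 (hu.1 hi)
  have hb : ∀ i ∈ σ w \ D w, b.2 i ≠ 0 := fun i hi => Finsupp.mem_support_iff.1 (hv.1 hi)
  have hsub := sh.sub w
  refine ⟨rfl, Prod.ext ?_ ?_, ?_, ?_⟩
  · ext i
    have h5 : i ∈ c.1 ∪ b.1 ↔ i ∈ (σ w)ᶜ := by rw [h1]
    have h6 : i ∈ c.1 → i ∉ b.1 := fun h => Finset.disjoint_left.1 hd h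
    simp only [Finset.mem_union, Finset.mem_compl] at h5 ⊢
    tauto
  · ext i
    have := hsum i
    rw [ind_apply]
    by_cases hi : i ∈ D w
    · have := hc i hi
      rw [if_pos hi]
      split_ifs at * <;> omega
    · rw [if_neg hi]
      by_cases hi2 : i ∈ σ w
      · have := hb i (Finset.mem_sdiff.2 ⟨hi2, hi⟩)
        split_ifs at * ; omega
      · split_ifs at * ; omega
  · ext i
    have := hsum i
    rw [ind_apply]
    by_cases hi : i ∈ σ w \ D w
    · have := hb i hi
      rw [if_pos hi]
      split_ifs at * <;> omega
    · rw [if_neg hi]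
      by_cases hi2 : i ∈ σ w
      · have : i ∈ D w := by
          by_contra h; exact hi (Finset.mem_sdiff.2 ⟨hi2, h⟩)
        have := hc i this
        split_ifs at * ; omega
      · split_ifs at * ; omega
  · rw [Finset.disjoint_left]
    intro i hi hiσ
    have h5 : i ∈ (σ w)ᶜ := by rw [← h1]; exact Finset.mem_union_right _ hi
    exact (Finset.mem_compl.1 h5) hiσ

lemma pb_crit_ne {E : Ch m →ₗ[ℚ] ℚ} (hE : IsOr σ E) (hsub : ∀ v, D v ⊆ σ v) {S : Finset (Fin m)}
    {v : V} (hS : Disjoint S (σ v)) :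
    pb E (S, ind (D v)) ((S ∪ σ v)ᶜ, ind (σ v \ D v)) ≠ 0 := by
  unfold pb
  have h1 : Disjoint S (S ∪ σ v)ᶜ := by
    rw [Finset.disjoint_left]
    intro i hi
    simp [hi]
  have h2 : S ∪ (S ∪ σ v)ᶜ = (σ v)ᶜ := by
    ext i
    have : i ∈ S → i ∉ σ v := fun h => Finset.disjoint_left.1 hS h
    simp only [Finset.mem_union, Finset.mem_compl]
    tauto
  have h3 : ind (D v) + ind (σ v \ D v) = ind (σ v) := by
    ext i
    simp only [Finsupp.add_apply, ind_apply, Finset.mem_sdiff]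
    have : i ∈ D v → i ∈ σ v := fun h => hsub v h
    by_cases h : i ∈ D v <;> by_cases h' : i ∈ σ v <;> simp_all
  rw [if_pos h1]
  simp only [h2, h3]
  exact mul_ne_zero (mul_ne_zero (eta_ne _) (sgT_ne _ _)) (hE.ne v)

lemma Bl_zero_of {E : Ch m →ₗ[ℚ] ℚ} {k : ℤ} {x y : Ch m} (hx : x ∈ Fil σ lv k)
    (h : ∀ c : Bs m, FK σ c.2.support → (∀ w, c.2.support ⊆ σ w → k ≤ lv w) →
      Bl E (ee c) y = 0) : Bl E x y = 0 := by
  have : Fil σ lv k ≤ LinearMap.ker ((Bl E).flip y) := by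
    apply Submodule.span_le.2
    rintro g ⟨c, h1, h2, rfl⟩
    exact h c h1 h2
  exact this hx

lemma pair_zero (sh : Shell σ D lv) (sh' : Shell σ (fun v => σ v \ D v) (fun v => - lv v))
    [Finite V] {E : Ch m →ₗ[ℚ] ℚ} (hE : IsOr σ E) {k : ℤ} {x : Ch m} (hx : x ∈ Fil σ lv k)
    {b : Bs m} {v : V} (hv : Rel σ (fun v => σ v \ D v) v b)
    (h : lv v < k ∨ (lv v = k ∧ (tog σ (fun v => σ v \ D v) v b).Nonempty)) :
    Bl E x (ee b) = 0 := by
  refine Bl_zero_of hx ?_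
  intro c h1 h2
  rw [Bl_ee]
  by_contra hne
  obtain ⟨u, hu⟩ := sh.exists_rel h1
  have h3 := h2 u hu.2
  obtain ⟨p1, p2, p3, p4⟩ := pair_crit sh sh' hE hu hv (by omega) hne
  subst p1
  rcases h with h | ⟨-, h⟩
  · omega
  · apply crit_tog (D := fun v => σ v \ D v) p4
    rw [← p3]
    exact h

/-- The inductive heart of the duality (exactness of the cone). -/
lemma cone_exact (sh : Shell σ D lv) (sh' : Shell σ (fun v => σ v \ D v) (fun v => - lv v))
    [Fintype V] {E : Ch m →ₗ[ℚ] ℚ} (hE : IsOr σ E) (L : ℤ) (hL : ∀ v, lv v < L) (d : ℕ) :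
    ∀ (k : ℤ) (x : Ch m) (g : Ch m →ₗ[ℚ] ℚ), L ≤ k + d → x ∈ Fil σ lv k → kd (FK σ) x = 0 →
      (∀ b : Bs m, FK σ b.2.support → (∀ w, b.2.support ⊆ σ w → lv w < k) → g (ee b) = 0) →
      (∀ b : Bs m, FK σ b.2.support → Bl E x (ee b) = g (kd (FK σ) (ee b))) →
      ∃ x', (∀ c ∈ x'.support, FK σ c.2.support) ∧ x = kd (FK σ) x' := by
  induction d with
  | zero =>
    intro k x g hk hx _ _ _
    have : x = 0 := by
      rw [← Finsupp.support_eq_empty]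
      by_contra hne
      obtain ⟨c, hc⟩ := Finset.nonempty_iff_ne_empty.2 hne
      obtain ⟨⟨v, hv⟩, h2⟩ := mem_Fil_iff.1 hx c hc
      have := h2 v hv
      have := hL v
      push_cast at hk
      omega
    exact ⟨0, by simp, by simp [this]⟩
  | succ d ih =>
    intro k x g hk hx hdx hg hxg
    set D' : V → Finset (Fin m) := fun v => σ v \ D v with hD'
    set lv' : V → ℤ := fun v => - lv v with hlv'
    have hgF : ∀ y ∈ Fil σ lv' (1 - k), g y = 0 := by
      intro y hy
      have : Fil σ lv' (1 - k) ≤ LinearMap.ker g := by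
        apply Submodule.span_le.2
        rintro z ⟨c, h1, h2, rfl⟩
        exact hg c h1 fun w hw => by have := h2 w hw; simp only [hlv'] at this; omega
      exact this hy
    -- correction from the functional
    set q : V × Finset (Fin m) → Ch m := fun p =>
      if lv p.1 = k ∧ Disjoint p.2 (σ p.1) then
        (g (ee ((p.2 ∪ σ p.1)ᶜ, ind (D' p.1))) /
          pb E (p.2, ind (D p.1)) ((p.2 ∪ σ p.1)ᶜ, ind (D' p.1))) • ee (p.2, ind (D p.1))
      else 0 with hq
    set cg : Ch m := ∑ p, q p with hcg
    have relc : ∀ (v : V) (S : Finset (Fin m)), Rel σ D v (S, ind (D v)) := by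
      intro v S; simp only [Rel, ind_support]; exact ⟨subset_rfl, sh.sub v⟩
    have relc' : ∀ (v : V) (S : Finset (Fin m)), Rel σ D' v (S, ind (D' v)) := by
      intro v S; simp only [Rel, ind_support]; exact ⟨subset_rfl, sh'.sub v⟩
    have hcgF : cg ∈ Fil σ lv k := by
      apply Submodule.sum_mem
      intro p _
      simp only [hq]
      split_ifs with h
      · apply Submodule.smul_mem
        have := sh.ee_mem_of_rel (relc p.1 p.2)
        rwa [h.1] at this
      · exact Submodule.zero_mem _
    have hdcg : kd (FK σ) cg ∈ Fil σ lv (k + 1) := by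
      rw [hcg, map_sum]
      apply Submodule.sum_mem
      intro p _
      simp only [hq]
      split_ifs with h
      · rw [map_smul]
        apply Submodule.smul_mem
        have := sh.kd_crit (relc p.1 p.2) (crit_tog h.2)
        rwa [h.1] at this
      · rw [map_zero]; exact Submodule.zero_mem _
    set x' := hop σ D x + cg with hx'
    have hx'F : x' ∈ Fil σ lv k := Submodule.add_mem _ (sh.hop_Fil hx) hcgF
    -- the new cycle
    have hx1 : x - kd (FK σ) x' ∈ Fil σ lv (k + 1) := by
      have hdef : defect σ D x ∈ Fil σ lv (k + 1) := by
        apply sh.defect_mem hx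
        intro c hc v hv hvk
        by_contra ht
        obtain ⟨t1, t2, t3⟩ := tog_empty hv ht
        have hc2 : c = (c.1, ind (D v)) := by
          refine Prod.ext rfl ?_
          ext i
          simp only [ind_apply]
          split_ifs with hi
          · exact t2 i hi
          · rw [← t1] at hi
            simpa using hi
        set b : Bs m := ((c.1 ∪ σ v)ᶜ, ind (D' v)) with hb
        have hbrel : Rel σ D' v b := relc' v _
        have hbdis : Disjoint (c.1 ∪ σ v)ᶜ (σ v) := by
          rw [Finset.disjoint_left]
          intro i hi
          simp only [Finset.mem_compl, Finset.mem_union, not_or] at hi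
          exact hi.2
        have hne : pb E c b ≠ 0 := by
          rw [hc2]; exact pb_crit_ne hE sh.sub t3
        have h1 := hxg b ⟨v, hbrel.2⟩
        have h2 : kd (FK σ) (ee b) ∈ Fil σ lv' (1 - k) := by
          have := sh'.kd_crit hbrel (crit_tog (D := D') hbdis)
          have e : lv' v + 1 = 1 - k := by simp only [hlv']; omega
          rwa [e] at this
        rw [hgF _ h2] at h1
        have h3 : Bl E x (ee b) = x c * pb E c b := by
          conv_lhs => rw [← Finsupp.sum_single x]
          rw [Finsupp.sum, map_sum, LinearMap.sum_apply, Finset.sum_eq_single c]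
          · have : Finsupp.single c (x c) = x c • ee c := by simp [ee]
            rw [this, map_smul, LinearMap.smul_apply, Bl_ee, smul_eq_mul]
          · intro e he hec
            have : Finsupp.single e (x e) = x e • ee e := by simp [ee]
            rw [this, map_smul, LinearMap.smul_apply, Bl_ee]
            by_contra hne2
            have hne3 : pb E e b ≠ 0 := fun h => hne2 (by rw [h, smul_zero])
            obtain ⟨g1, g2⟩ := mem_Fil_iff.1 hx e he
            obtain ⟨u, hu⟩ := sh.exists_rel g1
            have g3 := g2 u hu.2
            have A1 := (pair_crit sh sh' hE hu hbrel (by omega) hne3).2.1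
            have A2 := (pair_crit sh sh' hE hv hbrel le_rfl hne).2.1
            exact hec (A1.trans A2.symm)
          · intro h; exact absurd hc h
        rw [h3] at h1
        rcases mul_eq_zero.1 h1 with h | h
        · exact Finsupp.mem_support_iff.1 hc h
        · exact hne h
      unfold defect at hdef
      rw [hdx, map_zero, sub_zero] at hdef
      have := Submodule.sub_mem _ hdef hdcg
      rw [hx', map_add, ← sub_sub]
      exact this
    set g1 : Ch m →ₗ[ℚ] ℚ := g - Bl E x' - g.comp ((hop σ D').comp (kd (FK σ))) with hg1
    have hg1v : ∀ b : Bs m, FK σ b.2.support → (∀ w, b.2.support ⊆ σ w → lv w < k + 1) →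
        g1 (ee b) = 0 := by
      intro b hbf hbk
      obtain ⟨v, hv⟩ := sh'.exists_rel hbf
      have hvk := hbk v hv.2
      have hg1e : g1 (ee b) = g (ee b) - Bl E x' (ee b) - g (hop σ D' (kd (FK σ) (ee b))) := rfl
      by_cases hlt : lv v < k
      · have hbF : ee b ∈ Fil σ lv' (1 - k) :=
          Fil_mono (by simp only [hlv']; omega) (sh'.ee_mem_of_rel hv)
        rw [hg1e, hgF _ hbF, hgF _ (sh'.hop_Fil (kd_Fil hbF)),
          pair_zero sh sh' hE hx'F hv (Or.inl hlt)]
        simp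
      · have hveq : lv v = k := by omega
        by_cases ht : (tog σ D' v b).Nonempty
        · have h1 := hgF _ (by
            have := sh'.homotopy hv ht
            have e : lv' v + 1 = 1 - k := by simp only [hlv']; omega
            rw [e] at this
            exact this)
          rw [map_sub, map_sub] at h1
          have h2 : g (kd (FK σ) (hop σ D' (ee b))) = 0 := by
            rw [hop_ee]
            rcases sh'.hb_cases hv with h | ⟨q, c, h, h3, h4, -⟩
            · rw [h, map_zero, map_zero]
            · rw [h, map_smul, map_smul, ← hxg c ⟨v, h3.2⟩,
                pair_zero sh sh' hE hx h3 (Or.inr ⟨hveq, h4⟩), smul_zero]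
          rw [hg1e, pair_zero sh sh' hE hx'F hv (Or.inr ⟨hveq, ht⟩)]
          linear_combination h1 + h2
        · obtain ⟨t1, t2, t3⟩ := tog_empty hv ht
          have h1 : g (hop σ D' (kd (FK σ) (ee b))) = 0 := by
            apply hgF
            apply sh'.hop_Fil
            have := sh'.kd_crit hv ht
            have e : lv' v + 1 = 1 - k := by simp only [hlv']; omega
            rwa [e] at this
          have h2 : Bl E (hop σ D x) (ee b) = 0 := by
            have : Fil σ lv k ≤ LinearMap.ker (((Bl E).flip (ee b)).comp (hop σ D)) := by
              apply Submodule.span_le.2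
              rintro z ⟨c, c1, c2, rfl⟩
              obtain ⟨u, hu⟩ := sh.exists_rel c1
              have c3 := c2 u hu.2
              change Bl E (hop σ D (ee c)) (ee b) = 0
              rw [hop_ee]
              rcases sh.hb_cases hu with h | ⟨q, e, h, h3, h4, -⟩
              · rw [h, map_zero, LinearMap.zero_apply]
              · rw [h, map_smul, LinearMap.smul_apply, Bl_ee]
                by_contra hne2
                have hne3 : pb E e b ≠ 0 := fun h => hne2 (by rw [h, smul_zero])
                obtain ⟨p1, p2, p3, p4⟩ := pair_crit sh sh' hE h3 hv (by omega) hne3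
                rw [p2, p1] at h4
                refine crit_tog ?_ h4
                rw [Finset.disjoint_left]
                intro i hi
                simp only [Finset.mem_compl, Finset.mem_union, not_or] at hi
                exact hi.2
            exact this hx
          have hb2 : b.2 = ind (D' v) := by
            ext i
            simp only [ind_apply]
            split_ifs with hi
            · exact t2 i hi
            · rw [← t1] at hi
              simpa using hi
          set S0 := (b.1 ∪ σ v)ᶜ with hS0
          have hS0d : Disjoint S0 (σ v) := by
            rw [Finset.disjoint_left]
            intro i hi
            simp only [hS0, Finset.mem_compl, Finset.mem_union, not_or] at hi
            exact hi.2
          have hb1 : (S0 ∪ σ v)ᶜ = b.1 := by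
            ext i
            have : i ∈ b.1 → i ∉ σ v := fun h => Finset.disjoint_left.1 t3 h
            simp only [hS0, Finset.mem_compl, Finset.mem_union, not_or]
            tauto
          have hbb : ((S0 ∪ σ v)ᶜ, ind (D' v)) = b := Prod.ext hb1 hb2.symm
          have h3 : Bl E cg (ee b) = g (ee b) := by
            rw [hcg, map_sum, LinearMap.sum_apply, Finset.sum_eq_single (v, S0)]
            · simp only [hq]
              rw [if_pos ⟨hveq, hS0d⟩, map_smul, LinearMap.smul_apply, Bl_ee, hbb, smul_eq_mul]
              apply div_mul_cancel₀
              have := pb_crit_ne hE sh.sub hS0d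
              rwa [hbb] at this
            · rintro ⟨u, S⟩ - hne
              simp only [hq]
              split_ifs with h
              · rw [map_smul, LinearMap.smul_apply, Bl_ee]
                by_contra hne2
                have hne3 : pb E (S, ind (D u)) b ≠ 0 := fun h => hne2 (by rw [h, smul_zero])
                obtain ⟨p1, p2, p3, p4⟩ := pair_crit sh sh' hE (relc u S) hv
                  (by have := h.1; omega) hne3
                apply hne
                exact Prod.ext p1 (Prod.ext_iff.1 p2).1
              · rw [map_zero, LinearMap.zero_apply]
            · intro h; exact absurd (Finset.mem_univ _) h
          rw [hg1e, h1, hx', map_add, LinearMap.add_apply, h2, h3]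
          ring
    obtain ⟨x2, hx2, he⟩ := ih (k + 1) (x - kd (FK σ) x') g1 (by push_cast at hk ⊢; omega) hx1
      (by rw [map_sub, kd_kd, hdx, sub_zero]) hg1v (by
        intro b hb
        have e : g1 (kd (FK σ) (ee b)) = g (kd (FK σ) (ee b)) - Bl E x' (kd (FK σ) (ee b)) -
          g (hop σ D' (kd (FK σ) (kd (FK σ) (ee b)))) := rfl
        rw [e, kd_kd, map_zero, map_zero, sub_zero, map_sub, LinearMap.sub_apply, hxg b hb,
          hE.Bl_kd])
    refine ⟨x2 + x', ?_, ?_⟩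
    · intro c hc
      rcases Finset.mem_union.1 (Finsupp.support_add hc) with h | h
      · exact hx2 c h
      · exact (mem_Fil_iff.1 hx'F c h).1
    · rw [map_add, ← he]; abel

end

section
open SimplePolytope (mdeg)

lemma mdeg_eq (f : Fin m →₀ ℕ) : mdeg f = ∑ i, f i :=
  Finsupp.sum_fintype _ _ fun _ => rfl

lemma mdeg_add (f g : Fin m →₀ ℕ) : mdeg (f + g) = mdeg f + mdeg g := by
  simp only [mdeg_eq, Finsupp.add_apply, Finset.sum_add_distrib]

lemma mdeg_single (s : Fin m) : mdeg (Finsupp.single s 1) = 1 := by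
  simp [mdeg]

lemma mdeg_ind (τ : Finset (Fin m)) : mdeg (ind τ) = τ.card := by
  simp [mdeg_eq, ind_apply]

/-- bidegree predicate -/
def dg (i j : ℤ) (b : Bs m) : Prop := (b.1.card : ℤ) = i ∧ (b.1.card : ℤ) + mdeg b.2 = j

/-- bigraded piece -/
def pc (K : Finset (Fin m) → Prop) (i j : ℤ) : Submodule ℚ (Ch m) :=
  Submodule.span ℚ {g | ∃ b : Bs m, (b.1.card : ℤ) = i ∧ (b.1.card : ℤ) + mdeg b.2 = j ∧
    K b.2.support ∧ g = Finsupp.single b 1}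

/-- Betti numbers -/
def bt (K : Finset (Fin m) → Prop) (i j : ℤ) : ℕ :=
  Module.finrank ℚ
    (↥(LinearMap.ker (kd K) ⊓ pc K i j) ⧸
      Submodule.comap (LinearMap.ker (kd K) ⊓ pc K i j).subtype
        (Submodule.map (kd K) (pc K (i + 1) j)))

lemma betti_eq_bt {n : ℕ} (P : SimplePolytope n m) (i j : ℤ) : P.betti i j = bt P.IsFace i j := rfl

lemma pc_eq (K : Finset (Fin m) → Prop) (i j : ℤ) :
    pc K i j = Finsupp.supported ℚ ℚ {b : Bs m | dg i j b ∧ K b.2.support} := by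
  rw [Finsupp.supported_eq_span_single]
  unfold pc
  congr 1
  ext g
  simp only [dg, Set.mem_ofPred_eq, Set.mem_image]
  constructor
  · rintro ⟨b, h1, h2, h3, rfl⟩; exact ⟨b, ⟨⟨h1, h2⟩, h3⟩, rfl⟩
  · rintro ⟨b, ⟨⟨h1, h2⟩, h3⟩, rfl⟩; exact ⟨b, h1, h2, h3, rfl⟩

lemma mem_pc {K : Finset (Fin m) → Prop} {i j : ℤ} {x : Ch m} :
    x ∈ pc K i j ↔ ∀ b ∈ x.support, dg i j b ∧ K b.2.support := by
  rw [pc_eq, Finsupp.mem_supported]; rfl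

/-- bidegree projection -/
def pr (i j : ℤ) : Ch m →ₗ[ℚ] Ch m :=
  Finsupp.linearCombination ℚ (fun b => if dg i j b then ee b else 0)

lemma pr_ee (i j : ℤ) (b : Bs m) : pr i j (ee b) = if dg i j b then ee b else 0 := by
  simp [pr, ee, Finsupp.linearCombination_single]

lemma pr_of_pc {K : Finset (Fin m) → Prop} {i j : ℤ} {x : Ch m} (hx : x ∈ pc K i j) :
    pr i j x = x := by
  have : pc K i j ≤ LinearMap.ker (pr i j - LinearMap.id) := by
    apply Submodule.span_le.2
    rintro g ⟨b, h1, h2, h3, rfl⟩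
    simp only [SetLike.mem_coe, LinearMap.mem_ker, LinearMap.sub_apply, LinearMap.id_apply]
    rw [pr_ee, if_pos ⟨h1, h2⟩, sub_self]
  have := this hx
  simp only [LinearMap.mem_ker, LinearMap.sub_apply, LinearMap.id_apply] at this
  exact sub_eq_zero.1 this

/-- face supported chains -/
def Wf (K : Finset (Fin m) → Prop) : Submodule ℚ (Ch m) :=
  Finsupp.supported ℚ ℚ {b : Bs m | K b.2.support}

lemma mem_Wf {K : Finset (Fin m) → Prop} {x : Ch m} :
    x ∈ Wf K ↔ ∀ b ∈ x.support, K b.2.support := by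
  unfold Wf
  rw [Finsupp.mem_supported]; rfl

lemma ee_Wf {K : Finset (Fin m) → Prop} {b : Bs m} (h : K b.2.support) : ee b ∈ Wf K :=
  Finsupp.single_mem_supported ℚ _ h

lemma pr_Wf {K : Finset (Fin m) → Prop} {x : Ch m} (hx : x ∈ Wf K) (i j : ℤ) :
    pr i j x ∈ pc K i j := by
  have : Wf K ≤ (pc K i j).comap (pr i j) := by
    unfold Wf
    rw [Finsupp.supported_eq_span_single]
    apply Submodule.span_le.2
    rintro g ⟨b, hb, rfl⟩
    change pr i j (ee b) ∈ pc K i j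
    rw [pr_ee]
    split_ifs with h
    · exact Submodule.subset_span ⟨b, h.1, h.2, hb, rfl⟩
    · exact Submodule.zero_mem _
  exact this hx

lemma dg_kd {i j : ℤ} {b : Bs m} {s : Fin m} (hs : s ∈ b.1) :
    dg i j (b.1.erase s, b.2 + Finsupp.single s 1) ↔ dg (i + 1) j b := by
  have := Finset.card_erase_add_one hs
  unfold dg
  simp only [mdeg_add, mdeg_single]
  push_cast
  constructor <;> intro h <;> omega

lemma pr_kd (K : Finset (Fin m) → Prop) (i j : ℤ) (x : Ch m) :
    pr i j (kd K x) = kd K (pr (i + 1) j x) := by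
  have : (pr i j).comp (kd K) = (kd K).comp (pr (i + 1) j) := by
    apply ch_ext
    intro b
    simp only [LinearMap.comp_apply]
    rw [pr_ee, kd_ee, map_sum]
    split_ifs with h
    · rw [kd_ee]
      apply Finset.sum_congr rfl
      intro s hs
      split_ifs with hK
      · rw [map_smul, pr_ee, if_pos ((dg_kd hs).2 h)]
      · simp
    · rw [map_zero]
      apply Finset.sum_eq_zero
      intro s hs
      split_ifs with hK
      · rw [map_smul, pr_ee, if_neg (fun h' => h ((dg_kd hs).1 h')), smul_zero]
      · simp
  exact LinearMap.congr_fun this x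

lemma finite_dg (i j : ℤ) : {b : Bs m | dg i j b}.Finite := by
  have h1 : (Set.Iic (∑ s : Fin m, Finsupp.single s j.toNat : Fin m →₀ ℕ)).Finite :=
    Set.finite_Iic _
  refine ((Set.finite_univ (α := Finset (Fin m))).prod h1).subset ?_
  rintro b ⟨-, h⟩
  refine ⟨Set.mem_univ _, ?_⟩
  intro s
  rw [mdeg_eq] at h
  have h2 : b.2 s ≤ ∑ i, b.2 i := Finset.single_le_sum (fun i _ => Nat.zero_le (b.2 i)) (Finset.mem_univ s)
  have h3 : (∑ t : Fin m, Finsupp.single t j.toNat : Fin m →₀ ℕ) s = j.toNat := by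
    rw [Finsupp.finsetSum_apply]
    simp [Finsupp.single_apply]
  rw [h3]
  omega

instance fd_pc (K : Finset (Fin m) → Prop) (i j : ℤ) : FiniteDimensional ℚ (pc K i j) := by
  apply FiniteDimensional.span_of_finite
  refine ((finite_dg i j).image (fun b => (ee b : Ch m))).subset ?_
  rintro g ⟨b, h1, h2, h3, rfl⟩
  exact ⟨b, ⟨h1, h2⟩, rfl⟩

instance fd_Z (K : Finset (Fin m) → Prop) (i j : ℤ) :
    FiniteDimensional ℚ ↥(LinearMap.ker (kd K) ⊓ pc K i j) :=
  Submodule.finiteDimensional_of_le inf_le_right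

variable {V : Type} {σ D : V → Finset (Fin m)} {lv : V → ℤ}

lemma Bl_pr {E : Ch m →ₗ[ℚ] ℚ} (hE : IsOr σ E) {n : ℕ} (hcard : ∀ v, (σ v).card = n) {i j : ℤ}
    {x : Ch m} (hx : x ∈ pc (FK σ) i j) (y : Ch m) :
    Bl E x y = Bl E x (pr ((m : ℤ) - n - i) ((m : ℤ) - j) y) := by
  have : pc (FK σ) i j ≤ LinearMap.ker
      (Bl E - ((Bl E).flip.comp (pr ((m : ℤ) - n - i) ((m : ℤ) - j))).flip) := by
    apply Submodule.span_le.2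
    rintro g ⟨b, h1, h2, h3, rfl⟩
    simp only [SetLike.mem_coe, LinearMap.mem_ker]
    rw [LinearMap.sub_apply, sub_eq_zero]
    apply ch_ext
    intro c
    change Bl E (ee b) (ee c) = Bl E (ee b) (pr _ _ (ee c))
    rw [pr_ee]
    split_ifs with h
    · rfl
    · rw [map_zero, Bl_ee]
      by_contra hne
      obtain ⟨hd, w, e1, e2⟩ := hE.pb_ne hne
      apply h
      have c1 := congrArg Finset.card e1
      have c2 := congrArg mdeg e2
      rw [Finset.card_union_of_disjoint hd, Finset.card_compl, hcard, Fintype.card_fin] at c1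
      rw [mdeg_add, mdeg_ind, hcard] at c2
      have c3 : n ≤ m := by
        rw [← hcard w]; simpa using Finset.card_le_univ (σ w)
      unfold dg
      constructor <;> omega
  have h := this hx
  rw [LinearMap.mem_ker, LinearMap.sub_apply, sub_eq_zero] at h
  exact LinearMap.congr_fun h y

lemma exact_of_perp (sh : Shell σ D lv) (sh' : Shell σ (fun v => σ v \ D v) (fun v => - lv v))
    [Fintype V] (hlv : ∀ v, 0 ≤ lv v) {E : Ch m →ₗ[ℚ] ℚ} (hE : IsOr σ E) {n : ℕ}
    (hcard : ∀ v, (σ v).card = n) {i j : ℤ}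
    {x : Ch m} (hx : x ∈ pc (FK σ) i j) (hdx : kd (FK σ) x = 0)
    (h : ∀ y ∈ LinearMap.ker (kd (FK σ)) ⊓ pc (FK σ) ((m : ℤ) - n - i) ((m : ℤ) - j),
      Bl E x y = 0) : x ∈ (pc (FK σ) (i + 1) j).map (kd (FK σ)) := by
  have hker : ∀ y ∈ Wf (FK σ), kd (FK σ) y = 0 → Bl E x y = 0 := by
    intro y hy hdy
    rw [Bl_pr hE hcard hx]
    refine h _ ⟨?_, pr_Wf hy _ _⟩
    have e := pr_kd (FK σ) ((m : ℤ) - n - i - 1) ((m : ℤ) - j) y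
    rw [hdy, map_zero, sub_add_cancel] at e
    exact e.symm
  set dW : Wf (FK σ) →ₗ[ℚ] Ch m := (kd (FK σ)).comp (Wf (FK σ)).subtype with hdW
  have hmem : (Bl E x).comp (Wf (FK σ)).subtype ∈ LinearMap.range dW.dualMap := by
    rw [LinearMap.range_dualMap_eq_dualAnnihilator_ker, Submodule.mem_dualAnnihilator]
    intro w hw
    exact hker w w.2 hw
  obtain ⟨g, hg⟩ := hmem
  have hgW : ∀ b : Bs m, FK σ b.2.support → Bl E x (ee b) = g (kd (FK σ) (ee b)) := by
    intro b hb
    exact (LinearMap.congr_fun hg ⟨ee b, ee_Wf hb⟩).symm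
  obtain ⟨L, hL⟩ : ∃ L : ℕ, ∀ v, lv v < L := by
    refine ⟨∑ v, (lv v).toNat + 1, fun v => ?_⟩
    have := Finset.single_le_sum (fun v _ => Nat.zero_le (lv v).toNat) (Finset.mem_univ v)
    omega
  obtain ⟨x', h1, h2⟩ := cone_exact sh sh' hE L hL L 0 x g (by simp)
    (mem_Fil_iff.2 fun c hc => ⟨(mem_pc.1 hx c hc).2, fun w _ => hlv w⟩) hdx
    (fun b hb hw => by
      obtain ⟨v, hv⟩ := hb
      have := hw v hv
      have := hlv v
      omega) hgW
  refine ⟨pr (i + 1) j x', pr_Wf (mem_Wf.2 h1) _ _, ?_⟩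
  rw [← pr_kd, ← h2, pr_of_pc hx]

lemma bt_le (sh : Shell σ D lv) (sh' : Shell σ (fun v => σ v \ D v) (fun v => - lv v))
    [Fintype V] (hlv : ∀ v, 0 ≤ lv v) {E : Ch m →ₗ[ℚ] ℚ} (hE : IsOr σ E) {n : ℕ}
    (hcard : ∀ v, (σ v).card = n) (i j : ℤ) :
    bt (FK σ) i j ≤ bt (FK σ) ((m : ℤ) - n - i) ((m : ℤ) - j) := by
  unfold bt
  set i' := (m : ℤ) - n - i with hi'
  set j' := (m : ℤ) - j with hj'
  set Z := LinearMap.ker (kd (FK σ)) ⊓ pc (FK σ) i j with hZ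
  set Z' := LinearMap.ker (kd (FK σ)) ⊓ pc (FK σ) i' j' with hZ'
  set B := Submodule.comap Z.subtype (Submodule.map (kd (FK σ)) (pc (FK σ) (i + 1) j)) with hB
  set B' := Submodule.comap Z'.subtype (Submodule.map (kd (FK σ)) (pc (FK σ) (i' + 1) j')) with hB'
  set ψ : Z →ₗ[ℚ] Module.Dual ℚ Z' := (Z'.subtype.dualMap).comp ((Bl E).comp Z.subtype) with hψ
  have hψa : ∀ z z', ψ z z' = Bl E z z' := fun _ _ => rfl
  have h1 : LinearMap.ker ψ ≤ B := by
    intro z hz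
    refine exact_of_perp sh sh' hlv hE hcard z.2.2 z.2.1 ?_
    intro y hy
    exact LinearMap.congr_fun hz (⟨y, hy⟩ : Z')
  have h2 : LinearMap.range ψ ≤ B'.dualAnnihilator := by
    rintro _ ⟨z, rfl⟩
    rw [Submodule.mem_dualAnnihilator]
    rintro w ⟨y, -, hy⟩
    rw [hψa]
    change Bl E z (Z'.subtype w) = 0
    rw [← hy, ← hE.Bl_kd, z.2.1]
    simp
  have f1 := Submodule.finrank_mono h1
  have f2 := Submodule.finrank_mono h2
  have f3 := LinearMap.finrank_range_add_finrank_ker ψ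
  have f4 := Submodule.finrank_quotient_add_finrank B
  have f5 := Submodule.finrank_quotient_add_finrank B'
  have f6 := Subspace.finrank_add_finrank_dualAnnihilator_eq B'
  omega

lemma bt_neg (K : Finset (Fin m) → Prop) {i : ℤ} (hi : i < 0) (j : ℤ) : bt K i j = 0 := by
  have : pc K i j = ⊥ := by
    rw [eq_bot_iff]
    apply Submodule.span_le.2
    rintro g ⟨b, h1, -⟩
    omega
  unfold bt
  have h2 : LinearMap.ker (kd K) ⊓ pc K i j = ⊥ := by rw [this, inf_bot_eq]
  have h3 : Module.finrank ℚ ↥(LinearMap.ker (kd K) ⊓ pc K i j) = 0 := by rw [h2]; simp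
  have f4 := Submodule.finrank_quotient_add_finrank
    (Submodule.comap (LinearMap.ker (kd K) ⊓ pc K i j).subtype
        (Submodule.map (kd K) (pc K (i + 1) j)))
  omega

lemma bt_zero {K : Finset (Fin m) → Prop} (hK : K ∅) : bt K 0 0 = 1 := by
  have h0 : LinearMap.ker (kd K) ⊓ pc K 0 0 = Submodule.span ℚ {ee ((∅, 0) : Bs m)} := by
    apply le_antisymm
    · refine inf_le_right.trans ?_
      apply Submodule.span_le.2
      rintro g ⟨b, h1, h2, -, rfl⟩
      apply Submodule.subset_span
      have e1 : b.1 = ∅ := by rw [← Finset.card_eq_zero]; omega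
      have e2 : b.2 = 0 := by
        have : mdeg b.2 = 0 := by omega
        rw [mdeg_eq, Finset.sum_eq_zero_iff] at this
        ext s; exact this s (Finset.mem_univ s)
      have : b = (∅, 0) := Prod.ext e1 e2
      rw [this]; rfl
    · rw [Submodule.span_singleton_le_iff_mem]
      refine ⟨?_, Submodule.subset_span ⟨(∅, 0), ?_, ?_, ?_, rfl⟩⟩
      · change kd K (ee ((∅, 0) : Bs m)) = 0
        rw [kd_ee]; simp
      · simp
      · simp [mdeg_eq]
      · simpa using hK
  have h1 : pc K (0 + 1) 0 = ⊥ := by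
    rw [eq_bot_iff]
    apply Submodule.span_le.2
    rintro g ⟨b, h1, h2, -⟩
    omega
  unfold bt
  have h3 : Module.finrank ℚ ↥(LinearMap.ker (kd K) ⊓ pc K 0 0) = 1 := by
    rw [h0]
    apply finrank_span_singleton
    simp [ee]
  have f4 := Submodule.finrank_quotient_add_finrank
    (Submodule.comap (LinearMap.ker (kd K) ⊓ pc K 0 0).subtype
        (Submodule.map (kd K) (pc K (0 + 1) 0)))
  have h5 : Submodule.comap (LinearMap.ker (kd K) ⊓ pc K 0 0).subtype
        (Submodule.map (kd K) (pc K (0 + 1) 0)) = ⊥ := by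
    rw [h1, Submodule.map_bot, eq_bot_iff]
    intro x hx
    have : (x : Ch m) = 0 := hx
    simpa using this
  rw [h3] at f4
  have h6 : Module.finrank ℚ ↥(Submodule.comap (LinearMap.ker (kd K) ⊓ pc K 0 0).subtype
        (Submodule.map (kd K) (pc K (0 + 1) 0))) = 0 := by rw [h5]; simp
  omega

lemma bt_main [Fintype V] [Nonempty V] (sh : Shell σ D lv)
    (sh' : Shell σ (fun v => σ v \ D v) (fun v => - lv v)) (hlv : ∀ v, 0 ≤ lv v) {n : ℕ}
    (hcard : ∀ v, (σ v).card = n) :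
    (∀ i j : ℤ, bt (FK σ) i j = bt (FK σ) ((m : ℤ) - n - i) ((m : ℤ) - j)) ∧
    bt (FK σ) 0 0 = 1 ∧ bt (FK σ) ((m : ℤ) - n) m = 1 ∧
    (∀ i j : ℤ, i < 0 ∨ (m : ℤ) - n < i → bt (FK σ) i j = 0) := by
  obtain ⟨E, hE⟩ := sh.exists_isOr sh' hcard
  have hle := bt_le sh sh' hlv hE hcard
  have heq : ∀ i j : ℤ, bt (FK σ) i j = bt (FK σ) ((m : ℤ) - n - i) ((m : ℤ) - j) := by
    intro i j
    apply le_antisymm (hle i j)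
    have := hle ((m : ℤ) - n - i) ((m : ℤ) - j)
    rwa [sub_sub_cancel, sub_sub_cancel] at this
  have h0 : bt (FK σ) 0 0 = 1 := bt_zero ⟨Classical.arbitrary V, by simp⟩
  refine ⟨heq, h0, ?_, ?_⟩
  · have := heq 0 0
    rw [sub_zero, sub_zero] at this
    rw [← this, h0]
  · rintro i j (h | h)
    · exact bt_neg _ h j
    · rw [heq]
      exact bt_neg _ (by omega) _

end

section
open Filter Topology
variable {X : Type} [NormedAddCommGroup X] [NormedSpace ℝ X]

lemma cvx_eq {a c p q r : ℝ} (ha : 0 < a) (hc : 0 < c) (hac : a + c = 1)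
    (e : a * p + c * q = r) (h1 : p ≤ r) (h2 : q ≤ r) : p = r := by
  have h3 : a * (r - p) + c * (r - q) = 0 := by linear_combination r * hac - e
  have h4 := mul_nonneg hc.le (sub_nonneg.2 h2)
  have h5 := mul_nonneg ha.le (sub_nonneg.2 h1)
  have h6 : a * (r - p) = 0 := by linarith
  have := (mul_eq_zero.1 h6).resolve_left ha.ne'
  linarith

/-- A linear functional on a nonempty face attains its minimum at a vertex. -/
lemma minext {C : Set X} (hC : IsCompact C) {ι : Type} (l : ι → X →L[ℝ] ℝ) (b : ι → ℝ)
    (hl : ∀ i, ∀ x ∈ C, l i x ≤ b i) (τ : Set ι)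
    (hne : ∃ x ∈ C, ∀ i ∈ τ, l i x = b i) (h : X →L[ℝ] ℝ) :
    ∃ w ∈ C.extremePoints ℝ, (∀ i ∈ τ, l i w = b i) ∧
      ∀ x ∈ C, (∀ i ∈ τ, l i x = b i) → h w ≤ h x := by
  set F : Set X := C ∩ ⋂ i ∈ τ, {x | l i x = b i} with hF
  have memF : ∀ x, x ∈ F ↔ x ∈ C ∧ ∀ i ∈ τ, l i x = b i := by
    intro x; simp [hF]
  have hFc : IsCompact F := by
    apply hC.inter_right
    exact isClosed_biInter fun i _ => isClosed_eq (l i).continuous continuous_const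
  have hFn : F.Nonempty := by
    obtain ⟨x, h1, h2⟩ := hne; exact ⟨x, (memF x).2 ⟨h1, h2⟩⟩
  obtain ⟨x0, hx0, hmin⟩ := hFc.exists_isMinOn hFn h.continuous.continuousOn
  set M : Set X := F ∩ {x | h x = h x0} with hM
  have hMc : IsCompact M := hFc.inter_right (isClosed_eq h.continuous continuous_const)
  have hMn : M.Nonempty := ⟨x0, hx0, rfl⟩
  have hext : IsExtreme ℝ C M := by
    refine ⟨fun x hx => ((memF x).1 hx.1).1, ?_⟩
    rintro x hx y hy z ⟨hzF, hzh⟩ ⟨a, c, ha, hc, hac, rfl⟩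
    obtain ⟨-, hz2⟩ := (memF _).1 hzF
    have key : ∀ i ∈ τ, l i x = b i ∧ l i y = b i := by
      intro i hi
      have e := hz2 i hi
      simp only [map_add, map_smul, smul_eq_mul] at e
      have h1 := hl i x hx
      have h2 := hl i y hy
      exact ⟨cvx_eq ha hc hac e h1 h2, cvx_eq hc ha (by linarith) (by linarith) h2 h1⟩
    have hxF : x ∈ F := (memF x).2 ⟨hx, fun i hi => (key i hi).1⟩
    have hyF : y ∈ F := (memF y).2 ⟨hy, fun i hi => (key i hi).2⟩
    refine ⟨hxF, ?_⟩
    have h1 : h x0 ≤ h x := hmin hxF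
    have h2 : h x0 ≤ h y := hmin hyF
    have e : h (a • x + c • y) = h x0 := hzh
    simp only [map_add, map_smul, smul_eq_mul] at e
    change h x = h x0
    have := cvx_eq (p := - h x) (q := - h y) (r := - h x0) ha hc hac (by linarith)
      (by linarith) (by linarith)
    linarith
  obtain ⟨w, hw⟩ := hMc.extremePoints_nonempty hMn
  refine ⟨w, hext.extremePoints_subset_extremePoints hw, ((memF w).1 hw.1.1).2, ?_⟩
  intro x hx hxτ
  have e : h w = h x0 := hw.1.2
  rw [e]
  exact hmin ((memF x).2 ⟨hx, hxτ⟩)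

/-- H-polytope data -/
structure HP (C : Set X) (l : Fin m → X →L[ℝ] ℝ) (b : Fin m → ℝ) : Prop where
  cpt : IsCompact C
  mem : ∀ x, x ∈ C ↔ ∀ i, l i x ≤ b i

/-- active constraints -/
def act (l : Fin m → X →L[ℝ] ℝ) (b : Fin m → ℝ) (v : X) : Finset (Fin m) :=
  Finset.univ.filter fun i => l i v = b i

lemma mem_act {l : Fin m → X →L[ℝ] ℝ} {b : Fin m → ℝ} {v : X} {i : Fin m} :
    i ∈ act l b v ↔ l i v = b i := by simp [act]

variable {C : Set X} {l : Fin m → X →L[ℝ] ℝ} {b : Fin m → ℝ}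

lemma HP.small (hp : HP C l b) {v y : X} (hv : v ∈ C) (hy : ∀ i ∈ act l b v, l i y ≤ 0) :
    ∀ᶠ t : ℝ in 𝓝[>] 0, v + t • y ∈ C := by
  simp only [hp.mem]
  rw [eventually_all]
  intro i
  by_cases hi : i ∈ act l b v
  · filter_upwards [self_mem_nhdsWithin] with t ht
    have h1 := hy i hi
    have h2 := mem_act.1 hi
    simp only [map_add, map_smul, smul_eq_mul]
    have : t * l i y ≤ 0 := mul_nonpos_of_nonneg_of_nonpos (le_of_lt ht) h1
    linarith
  · have h1 : l i v < b i := lt_of_le_of_ne ((hp.mem v).1 hv i) (fun h => hi (mem_act.2 h))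
    have hcont : Continuous fun t : ℝ => l i (v + t • y) := by fun_prop
    have : ∀ᶠ t : ℝ in 𝓝 0, l i (v + t • y) < b i := by
      apply hcont.tendsto 0 |>.eventually_lt_const
      simpa using h1
    exact (this.filter_mono nhdsWithin_le_nhds).mono fun t ht => le_of_lt ht

lemma HP.inj (hp : HP C l b) {v y : X} (hv : v ∈ C.extremePoints ℝ)
    (hy : ∀ i ∈ act l b v, l i y = 0) : y = 0 := by
  have h1 := hp.small hv.1 (fun i hi => (hy i hi).le)
  have h2 := hp.small (y := -y) hv.1 (fun i hi => by rw [map_neg, hy i hi, neg_zero])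
  obtain ⟨t, ⟨h3, h4⟩, ht⟩ := ((h1.and h2).and self_mem_nhdsWithin).exists
  have ht' : (0 : ℝ) < t := ht
  have := hv.2 h3 h4 ⟨1/2, 1/2, by norm_num, by norm_num, by norm_num, by
    rw [smul_add, smul_add, smul_neg, smul_neg]
    have : (1/2 : ℝ) • v + (1/2 : ℝ) • v = v := by rw [← add_smul]; norm_num
    nth_rewrite 3 [← this]
    abel⟩
  have h5 : t • y = 0 := by simpa using this
  exact (smul_eq_zero.1 h5).resolve_left ht'.ne'

lemma HP.dual (hp : HP C l b) [FiniteDimensional ℝ X] {v : X} (hv : v ∈ C.extremePoints ℝ)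
    (hc : (act l b v).card = Module.finrank ℝ X) :
    ∃ e : Fin m → X, ∀ i ∈ act l b v, ∀ j ∈ act l b v, l j (e i) = if i = j then -1 else 0 := by
  set Φ : X →ₗ[ℝ] (act l b v → ℝ) := LinearMap.pi fun i => (l i : X →ₗ[ℝ] ℝ) with hΦ
  have hinj : Function.Injective Φ := by
    rw [← LinearMap.ker_eq_bot, eq_bot_iff]
    intro y hy
    have : ∀ i : act l b v, l i y = 0 := fun i => congrFun hy i
    exact hp.inj hv fun i hi => this ⟨i, hi⟩
  have hsurj : Function.Surjective Φ := by
    rw [← LinearMap.injective_iff_surjective_of_finrank_eq_finrank]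
    · exact hinj
    · simp [hc]
  choose g hg using hsurj
  refine ⟨fun i => g fun j => if i = j then -1 else 0, ?_⟩
  intro i hi j hj
  exact congrFun (hg fun j => if i = (j : Fin m) then -1 else 0) ⟨j, hj⟩

lemma HP.shell (hp : HP C l b) (e : X → Fin m → X)
    (he : ∀ v ∈ C.extremePoints ℝ, ∀ i ∈ act l b v, ∀ j ∈ act l b v,
      l j (e v i) = if i = j then -1 else 0)
    (h : X →L[ℝ] ℝ) (hh : ∀ v ∈ C.extremePoints ℝ, ∀ i ∈ act l b v, h (e v i) ≠ 0)
    (lv : C.extremePoints ℝ → ℤ) (hlv : ∀ v w, h v.1 < h w.1 → lv v < lv w) :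
    Shell (fun v : C.extremePoints ℝ => act l b v.1)
      (fun v => (act l b v.1).filter fun i => h (e v.1 i) < 0) lv := by
  refine ⟨fun v => Finset.filter_subset _ _, ?_, ?_⟩
  · rintro ⟨v, hv⟩ ⟨w, hw⟩ τ h1 h2 h3 hne
    apply hlv
    simp only at h1 h2 h3 ⊢
    have hwv : w - v ≠ 0 := by
      intro h; apply hne; exact Subtype.ext (sub_eq_zero.1 h)
    have hexp : w - v = ∑ i ∈ act l b v, (b i - l i w) • e v i := by
      rw [← sub_eq_zero]
      apply hp.inj hv
      intro j hj
      rw [map_sub, map_sum, Finset.sum_eq_single j]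
      · rw [map_smul, he v hv j hj j hj, map_sub, mem_act.1 hj]
        simp
      · intro i hi hij
        rw [map_smul, he v hv i hi j hj, if_neg hij, smul_zero]
      · intro h; exact absurd hj h
    have hpos : 0 < h (w - v) := by
      rw [hexp, map_sum]
      have hterm : ∀ i ∈ act l b v, 0 ≤ (b i - l i w) ∧
          (b i - l i w ≠ 0 → 0 < h (e v i)) := by
        intro i hi
        refine ⟨sub_nonneg.2 ((hp.mem w).1 hw.1 i), fun hne2 => ?_⟩
        have hiτ : i ∉ τ := by
          intro hiτ
          have := mem_act.1 (h3 hiτ)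
          exact hne2 (by rw [this, sub_self])
        have : ¬ h (e v i) < 0 := fun h' => hiτ (h1 (Finset.mem_filter.2 ⟨hi, h'⟩))
        exact lt_of_le_of_ne (not_lt.1 this) (Ne.symm (hh v hv i hi))
      apply Finset.sum_pos'
      · intro i hi
        rw [map_smul, smul_eq_mul]
        obtain ⟨h4, h5⟩ := hterm i hi
        by_cases h6 : b i - l i w = 0
        · rw [h6, zero_mul]
        · exact mul_nonneg h4 (h5 h6).le
      · by_contra hcon
        push Not at hcon
        apply hwv
        rw [hexp]
        apply Finset.sum_eq_zero
        intro i hi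
        obtain ⟨h4, h5⟩ := hterm i hi
        by_cases h6 : b i - l i w = 0
        · rw [h6, zero_smul]
        · have h7 := hcon i hi
          rw [map_smul, smul_eq_mul] at h7
          have := mul_pos (lt_of_le_of_ne h4 (Ne.symm h6)) (h5 h6)
          linarith
    rw [map_sub] at hpos
    linarith
  · rintro ⟨v, hv⟩ τ h1 h2
    simp only at h1 h2 ⊢
    obtain ⟨i, hi, hiτ⟩ := Finset.not_subset.1 h2
    obtain ⟨hi1, hi2⟩ := Finset.mem_filter.1 hi
    obtain ⟨t, ht, ht0⟩ := ((hp.small (y := e v i) hv.1 (by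
      intro j hj
      rw [he v hv i hi1 j hj]
      split_ifs <;> norm_num)).and self_mem_nhdsWithin).exists
    have ht0' : (0 : ℝ) < t := ht0
    have hτ : ∀ j ∈ (τ : Set (Fin m)), l j (v + t • e v i) = b j := by
      intro j hj
      have hj' := h1 (Finset.mem_coe.1 hj)
      rw [map_add, map_smul, he v hv i hi1 j hj', if_neg, smul_zero, add_zero, mem_act.1 hj']
      rintro rfl
      exact hiτ hj
    obtain ⟨w, hw1, hw2, hw3⟩ := minext hp.cpt l b (fun i x hx => (hp.mem x).1 hx i)
      (τ : Set (Fin m)) ⟨_, ht, hτ⟩ h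
    refine ⟨⟨w, hw1⟩, fun j hj => mem_act.2 (hw2 j hj), ?_⟩
    apply hlv
    have := hw3 _ ht hτ
    rw [map_add, map_smul, smul_eq_mul] at this
    have := mul_neg_of_pos_of_neg ht0' hi2
    simp only
    linarith

lemma HP.exists_shell (hp : HP C l b) [FiniteDimensional ℝ X] {n : ℕ} (hn : Module.finrank ℝ X = n)
    (hc : ∀ v ∈ C.extremePoints ℝ, (act l b v).card = n) [Fintype (C.extremePoints ℝ)] :
    ∃ (D : C.extremePoints ℝ → Finset (Fin m)) (lv : C.extremePoints ℝ → ℤ),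
      Shell (fun v : C.extremePoints ℝ => act l b v.1) D lv ∧
      Shell (fun v : C.extremePoints ℝ => act l b v.1) (fun v => act l b v.1 \ D v)
        (fun v => - lv v) ∧ ∀ v, 0 ≤ lv v := by
  have hex : ∀ v : X, ∃ e : Fin m → X, v ∈ C.extremePoints ℝ → ∀ i ∈ act l b v,
      ∀ j ∈ act l b v, l j (e i) = if i = j then -1 else 0 := by
    intro v
    by_cases hv : v ∈ C.extremePoints ℝ
    · obtain ⟨e, he⟩ := hp.dual hv (by rw [hc v hv, hn])
      exact ⟨e, fun _ => he⟩
    · exact ⟨fun _ => 0, fun h => absurd h hv⟩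
  choose e he using hex
  obtain ⟨h0, hh0⟩ := Module.exists_dual_forall_apply_ne_zero (K := ℝ)
    (fun p : Σ v : C.extremePoints ℝ, act l b v.1 => e p.1.1 p.2.1) (by
      rintro ⟨⟨v, hv⟩, ⟨i, hi⟩⟩ h0
      have := he v hv i hi i hi
      simp only at h0
      rw [h0] at this
      simp at this)
  set h : X →L[ℝ] ℝ := LinearMap.toContinuousLinearMap h0 with hh
  have hne : ∀ v ∈ C.extremePoints ℝ, ∀ i ∈ act l b v, h (e v i) ≠ 0 :=
    fun v hv i hi => hh0 ⟨⟨v, hv⟩, ⟨i, hi⟩⟩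
  set lv : C.extremePoints ℝ → ℤ := fun v =>
    ((Finset.univ.filter fun w : C.extremePoints ℝ => h w.1 < h v.1).card : ℤ) with hlv
  have hmono : ∀ v w : C.extremePoints ℝ, h v.1 < h w.1 → lv v < lv w := by
    intro v w hvw
    simp only [hlv]
    rw [Nat.cast_lt]
    apply Finset.card_lt_card
    rw [Finset.ssubset_iff_of_subset]
    · exact ⟨v, by simp [hvw], by simp⟩
    · intro u hu
      simp only [Finset.mem_filter, Finset.mem_univ, true_and] at hu ⊢
      exact hu.trans hvw
  refine ⟨_, lv, hp.shell e he h hne lv hmono, ?_, fun v => by simp [hlv]⟩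
  have h2 := hp.shell e he (-h) (by
    intro v hv i hi
    simpa using hne v hv i hi) (fun v => - lv v) (by
    intro v w hvw
    simp only [neg_apply, neg_lt_neg_iff] at hvw ⊢
    exact hmono _ _ hvw)
  convert h2 using 2 with v
  ext i
  simp only [Finset.mem_sdiff, Finset.mem_filter, neg_apply, neg_lt_zero]
  constructor
  · rintro ⟨h3, h4⟩
    refine ⟨h3, lt_of_le_of_ne (not_lt.1 fun h5 => h4 ⟨h3, h5⟩) (Ne.symm (hne v v.2 i h3))⟩
  · rintro ⟨h3, h4⟩
    exact ⟨h3, fun h5 => absurd h5.2 (not_lt.2 h4.le)⟩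

end

section
open Filter Topology

lemma conv_le {X : Type} [NormedAddCommGroup X] [NormedSpace ℝ X] {S : Set X} (a : X →L[ℝ] ℝ)
    {z : X} {c : ℝ} (h : ∀ w ∈ S, a (w - z) ≤ c) : ∀ p ∈ convexHull ℝ S, a (p - z) ≤ c := by
  have : convexHull ℝ S ⊆ {p | a p ≤ c + a z} := by
    apply convexHull_min
    · intro w hw
      have := h w hw
      rw [map_sub] at this
      change a w ≤ c + a z
      linarith
    · exact convex_halfSpace_le a.isBoundedLinearMap.toIsLinearMap _
  intro p hp
  have h1 : a p ≤ c + a z := this hp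
  rw [map_sub]
  linarith

variable {n : ℕ}

lemma hrep (P : SimplePolytope n m) (l : Fin m → EuclideanSpace ℝ (Fin n) →L[ℝ] ℝ) (b : Fin m → ℝ)
    (hle : ∀ i, ∀ x ∈ P.carrier, l i x ≤ b i)
    (hfac : ∀ i, P.facet i = {x ∈ P.carrier | l i x = b i}) (hcpt : IsCompact P.carrier)
    (hconv : Convex ℝ P.carrier) (x : EuclideanSpace ℝ (Fin n)) (hx : ∀ i, l i x ≤ b i) :
    x ∈ P.carrier := by
  by_contra hxP
  obtain ⟨V, hV⟩ := P.isPolytope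
  have hVP : ∀ w ∈ V, w ∈ P.carrier := fun w hw => by
    rw [hV]; exact subset_convexHull ℝ _ hw
  obtain ⟨z, hz⟩ : (interior P.carrier).Nonempty := by
    rw [hconv.interior_nonempty_iff_affineSpan_eq_top]
    exact P.fullDim
  have hzP : z ∈ P.carrier := interior_subset hz
  obtain ⟨r, hr, hball⟩ := Metric.isOpen_iff.1 isOpen_interior z hz
  -- the vertices, enumerated
  set w : Fin V.card → EuclideanSpace ℝ (Fin n) := fun k => (V.equivFin.symm k).1 with hw
  have hwV : ∀ k, w k ∈ V := fun k => (V.equivFin.symm k).2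
  have hVw : ∀ v ∈ V, ∃ k, w k = v := fun v hv => ⟨V.equivFin ⟨v, hv⟩, by simp [hw]⟩
  set ev : Fin V.card → (EuclideanSpace ℝ (Fin n) →L[ℝ] ℝ) →L[ℝ] ℝ := fun k =>
    ContinuousLinearMap.apply ℝ ℝ (w k - z) with hev
  set A : Set (EuclideanSpace ℝ (Fin n) →L[ℝ] ℝ) := {a | ∀ k, ev k a ≤ 1} with hA
  have hAP : ∀ a ∈ A, ∀ p ∈ P.carrier, a (p - z) ≤ 1 := by
    intro a ha
    rw [hV]
    apply conv_le
    intro v hv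
    obtain ⟨k, rfl⟩ := hVw v hv
    exact ha k
  have hAc : IsCompact A := by
    apply Metric.isCompact_of_isClosed_isBounded
    · have : A = ⋂ k, {a | ev k a ≤ 1} := by ext a; simp [hA]
      rw [this]
      exact isClosed_iInter fun k => isClosed_le (ev k).continuous continuous_const
    · rw [Metric.isBounded_iff_subset_closedBall 0]
      refine ⟨2 / r, fun a ha => ?_⟩
      rw [mem_closedBall_zero_iff]
      have hb1 : ∀ u : EuclideanSpace ℝ (Fin n), ‖u‖ < r → a u ≤ 1 := by
        intro u hu
        have := hAP a ha (z + u) (interior_subset (hball (by simpa using hu)))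
        simpa using this
      apply ContinuousLinearMap.opNorm_le_bound _ (by positivity)
      intro u
      by_cases hu : u = 0
      · simp [hu]
      · have hun : 0 < ‖u‖ := norm_pos_iff.2 hu
        set t := r / 2 / ‖u‖ with ht
        have htp : 0 < t := by positivity
        have hnorm : ‖t • u‖ < r := by
          rw [norm_smul, Real.norm_of_nonneg htp.le, ht, div_mul_cancel₀ _ hun.ne']
          linarith
        have h1 := hb1 (t • u) hnorm
        have h2 := hb1 (-(t • u)) (by rwa [norm_neg])
        rw [map_neg, map_smul, smul_eq_mul] at h2
        rw [map_smul, smul_eq_mul] at h1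
        have h3 : t * |a u| ≤ 1 := by
          rw [← abs_of_pos htp, ← abs_mul, abs_le]; constructor <;> linarith
        have h4 : (2 / r) * ‖u‖ = 1 / t := by rw [ht]; field_simp
        rw [h4, Real.norm_eq_abs, le_div_iff₀ htp]
        linarith
  have hpA : HP A ev (fun _ => 1) := ⟨hAc, fun a => Iff.rfl⟩
  -- separate
  obtain ⟨f, u, hf1, hf2⟩ := geometric_hahn_banach_closed_point hconv hcpt.isClosed hxP
  have hfz := hf1 z hzP
  have hden : 0 < u - f z := by linarith
  have ha0 : (u - f z)⁻¹ • f ∈ A := by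
    intro k
    change (u - f z)⁻¹ * f (w k - z) ≤ 1
    rw [inv_mul_le_iff₀ hden, map_sub]
    have := hf1 _ (hVP _ (hwV k))
    linarith
  obtain ⟨e, he, -, hemin⟩ := minext hAc ev (fun _ => 1) (fun i a ha => ha i) ∅
    ⟨_, ha0, by simp⟩ (-(ContinuousLinearMap.apply ℝ ℝ (x - z)))
  have hex : 1 < e (x - z) := by
    have h1 := hemin _ ha0 (by simp)
    change -(e (x - z)) ≤ -((u - f z)⁻¹ * f (x - z)) at h1
    have h2 : 1 < (u - f z)⁻¹ * f (x - z) := by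
      rw [lt_inv_mul_iff₀ hden, map_sub]
      linarith
    linarith
  have hspan : ∀ y : EuclideanSpace ℝ (Fin n) →L[ℝ] ℝ, (∀ k, e (w k - z) = 1 → y (w k - z) = 0) →
      y = 0 := by
    intro y hy
    apply hpA.inj he
    intro k hk
    exact hy k (mem_act.1 hk)
  have heA : e ∈ A := he.1
  set F : Set (EuclideanSpace ℝ (Fin n)) := {p ∈ P.carrier | e (p - z) = 1} with hF
  obtain ⟨k0, hk0⟩ : ∃ k, e (w k - z) = 1 := by
    by_contra hcon
    push Not at hcon
    have := hspan e (fun k hk => absurd hk (hcon k))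
    rw [this] at hex
    simp at hex
    linarith
  have hwF : ∀ k, e (w k - z) = 1 → w k ∈ F := fun k hk => ⟨hVP _ (hwV k), hk⟩
  have hFexp : IsExposed ℝ P.carrier F := by
    intro _
    refine ⟨e, ?_⟩
    ext p
    simp only [hF, Set.mem_ofPred_eq]
    constructor
    · rintro ⟨h1, h2⟩
      refine ⟨h1, fun y hy => ?_⟩
      have := hAP e heA y hy
      rw [map_sub] at this h2
      linarith
    · rintro ⟨h1, h2⟩
      refine ⟨h1, le_antisymm (hAP e heA p h1) ?_⟩
      have := h2 _ (hVP _ (hwV k0))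
      rw [map_sub] at hk0 ⊢
      linarith
  have hvker : vectorSpan ℝ F ≤ LinearMap.ker (e : EuclideanSpace ℝ (Fin n) →ₗ[ℝ] ℝ) := by
    rw [vectorSpan_def]
    apply Submodule.span_le.2
    rintro _ ⟨p, ⟨-, hp⟩, q, ⟨-, hq⟩, rfl⟩
    change e (p - q) = 0
    rw [map_sub] at hp hq ⊢
    linarith
  have hfr : Module.finrank ℝ (vectorSpan ℝ F) = n - 1 := by
    have hker : Module.finrank ℝ (LinearMap.ker (e : EuclideanSpace ℝ (Fin n) →ₗ[ℝ] ℝ)) < n := by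
      have : LinearMap.ker (e : EuclideanSpace ℝ (Fin n) →ₗ[ℝ] ℝ) < ⊤ := by
        rw [lt_top_iff_ne_top]
        intro h
        have : w k0 - z ∈ LinearMap.ker (e : EuclideanSpace ℝ (Fin n) →ₗ[ℝ] ℝ) := by
          rw [h]; trivial
        have h2 : e (w k0 - z) = 0 := this
        rw [hk0] at h2
        norm_num at h2
      have := Submodule.finrank_lt this.ne
      simpa using this
    have h1 := Submodule.finrank_mono hvker
    have htop : vectorSpan ℝ F ⊔ Submodule.span ℝ {w k0 - z} = ⊤ := by
      by_contra hne
      obtain ⟨y, hy0, hy⟩ := Submodule.exists_le_ker_of_lt_top _ (lt_top_iff_ne_top.2 hne)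
      apply hy0
      have := hspan (LinearMap.toContinuousLinearMap y) (by
        intro k hk
        have h2 : w k - z ∈ vectorSpan ℝ F ⊔ Submodule.span ℝ {w k0 - z} := by
          have e1 : w k - z = (w k -ᵥ w k0) + (w k0 - z) := by rw [vsub_eq_sub]; abel
          rw [e1]
          exact Submodule.add_mem_sup
            (vsub_mem_vectorSpan ℝ (hwF k hk) (hwF k0 hk0)) (Submodule.mem_span_singleton_self _)
        exact hy h2)
      simpa using this
    have h2 := Submodule.finrank_add_le_finrank_add_finrank (vectorSpan ℝ F)
      (Submodule.span ℝ {w k0 - z})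
    rw [htop] at h2
    have h3 : Module.finrank ℝ (Submodule.span ℝ {w k0 - z}) ≤ 1 :=
      (finrank_span_le_card _).trans (by simp)
    simp only [finrank_top, finrank_euclideanSpace, Fintype.card_fin] at h2
    omega
  obtain ⟨i, hi⟩ := P.facet_complete F hFexp ⟨_, hwF k0 hk0⟩ hfr
  have hlF : ∀ p ∈ F, l i p = b i := by
    intro p hp
    rw [hi, hfac i] at hp
    exact hp.2
  set β := b i - l i z with hβ
  have hlβ : l i = β • e := by
    rw [← sub_eq_zero]
    apply hspan
    intro k hk
    change l i (w k - z) - β * e (w k - z) = 0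
    rw [hk, map_sub, hlF _ (hwF k hk), hβ]
    ring
  have hβ0 : 0 ≤ β := sub_nonneg.2 (hle i z hzP)
  have hβ1 : β ≠ 0 := by
    intro h
    have hzF : z ∈ F := by
      rw [hi, hfac i]
      exact ⟨hzP, by linarith⟩
    have := hzF.2
    simp at this
  have hβp : 0 < β := lt_of_le_of_ne hβ0 (Ne.symm hβ1)
  have h1 : l i (x - z) = β * e (x - z) := by rw [hlβ]; rfl
  rw [map_sub] at h1
  have h2 := hx i
  nlinarith [mul_pos hβp (sub_pos.2 hex)]

lemma poly_main (P : SimplePolytope n m) :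
    (∀ i j : ℤ, P.betti i j = P.betti ((m : ℤ) - n - i) ((m : ℤ) - j)) ∧
    P.betti 0 0 = 1 ∧ P.betti ((m : ℤ) - n) m = 1 ∧
    (∀ i j : ℤ, i < 0 ∨ (m : ℤ) - n < i → P.betti i j = 0) := by
  obtain ⟨V, hV⟩ := P.isPolytope
  have hcpt : IsCompact P.carrier := by
    rw [hV]; exact V.finite_toSet.isCompact_convexHull ℝ
  have hconv : Convex ℝ P.carrier := by rw [hV]; exact convex_convexHull ℝ _
  have hne : P.carrier.Nonempty := by
    rw [← affineSpan_nonempty ℝ, P.fullDim]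
    exact ⟨0, trivial⟩
  have hlb : ∀ i, ∃ (l : EuclideanSpace ℝ (Fin n) →L[ℝ] ℝ) (b : ℝ), (∀ x ∈ P.carrier, l x ≤ b) ∧
      P.facet i = {x ∈ P.carrier | l x = b} := by
    intro i
    obtain ⟨h1, h2, -⟩ := P.facet_isFacet i
    obtain ⟨l, hl⟩ := h1 h2
    obtain ⟨p, hp⟩ := h2
    have hp' := hp
    rw [hl] at hp'
    refine ⟨l, l p, hp'.2, ?_⟩
    rw [hl]
    ext x
    simp only [Set.mem_ofPred_eq]
    constructor
    · rintro ⟨h3, h4⟩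
      exact ⟨h3, le_antisymm (hp'.2 x h3) (h4 p hp'.1)⟩
    · rintro ⟨h3, h4⟩
      exact ⟨h3, fun y hy => by rw [h4]; exact hp'.2 y hy⟩
  choose l b hle hfac using hlb
  have hp : HP P.carrier l b :=
    ⟨hcpt, fun x => ⟨fun hx i => hle i x hx, hrep P l b hle hfac hcpt hconv x⟩⟩
  have hfin : (P.carrier.extremePoints ℝ).Finite := by
    rw [hV]
    exact V.finite_toSet.subset extremePoints_convexHull_subset
  have : Fintype (P.carrier.extremePoints ℝ) := hfin.fintype
  have : Nonempty (P.carrier.extremePoints ℝ) :=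
    (hcpt.extremePoints_nonempty hne).to_subtype
  have hcard : ∀ v ∈ P.carrier.extremePoints ℝ, (act l b v).card = n := by
    intro v hv
    refine Eq.trans ?_ (P.simple v hv)
    rw [← Set.ncard_coe_finset]
    congr 1
    ext i
    simp only [Finset.mem_coe, mem_act, hfac i, Set.mem_ofPred_eq]
    exact ⟨fun h => ⟨hv.1, h⟩, fun h => h.2⟩
  obtain ⟨D, lv, sh, sh', hlv⟩ := hp.exists_shell (by simp) hcard
  have hK : P.IsFace = FK (fun v : P.carrier.extremePoints ℝ => act l b v.1) := by
    funext τ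
    apply propext
    constructor
    · rintro ⟨x, hx, hxτ⟩
      obtain ⟨w, hw1, hw2, -⟩ := minext hcpt l b hle (τ : Set (Fin m)) ⟨x, hx, by
        intro i hi
        have : x ∈ P.facet i := Set.mem_iInter₂.1 hxτ i hi
        rw [hfac i] at this
        exact this.2⟩ 0
      exact ⟨⟨w, hw1⟩, fun i hi => mem_act.2 (hw2 i hi)⟩
    · rintro ⟨v, hv⟩
      refine ⟨v.1, v.2.1, Set.mem_iInter₂.2 fun i hi => ?_⟩
      rw [hfac i]
      exact ⟨v.2.1, mem_act.1 (hv hi)⟩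
  have := bt_main sh sh' hlv (n := n) (fun v => hcard v.1 v.2)
  rw [← hK] at this
  exact this

end

end TorDual

/-- Duality of the bigraded Betti numbers of the Tor-algebra of a simple
polytope `P` of dimension `n` with `m` facets:
`β^{-i,2j}(P) = β^{-(m-n)+i,2(m-j)}(P)`, `β^{0,0} = β^{-(m-n),2m} = 1`, and
`β^{-i,2j} = 0` for `i < 0` or `i > m - n`. -/
theorem stmt_14 (n m : ℕ) (P : SimplePolytope n m) :
    (∀ i j : ℤ, P.betti i j = P.betti ((m : ℤ) - n - i) ((m : ℤ) - j)) ∧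
    P.betti 0 0 = 1 ∧ P.betti ((m : ℤ) - n) m = 1 ∧
    (∀ i j : ℤ, i < 0 ∨ (m : ℤ) - n < i → P.betti i j = 0) :=
  TorDual.poly_main P
end
end
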